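/- arXiv:2502.12229 — 3 statements merged into one kernel-verified Lean document; each statement's English description precedes it below -/
import Mathlib

section
/- Let μ be a measure on ℝ with all moments finite and infinite support. Assume: (1) μ is determinate, (2) supp(μ) ⊆ [0,∞), (3) 0 ∈ supp(μ), (4) μ({0}) = 0. Then the index of determinacy of μ at 0 is infinite; that is, for every k ∈ ℕ₀, the measure x^{2k}·μ (the measure with density x ↦ x^{2k} with respect to μ) is determinate. -/
open MeasureTheory Polynomial Filter

noncomputable section

/-- A measure on `ℝ` has all moments finite. -/
def HasAllMoments (μ : Measure ℝ) : Prop :=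
  ∀ n : ℕ, Integrable (fun x : ℝ => |x| ^ n) μ

/-- The (topological) support of a measure on `ℝ`: points all of whose
neighborhoods have positive measure. -/
def mSupp (μ : Measure ℝ) : Set ℝ :=
  {x : ℝ | ∀ U ∈ nhds x, μ U ≠ 0}

/-- A measure with all moments finite is determinate if it is the unique measure
with all moments finite having its moment sequence. -/
def IsDeterminate (μ : Measure ℝ) : Prop :=
  ∀ ν : Measure ℝ, HasAllMoments ν →
    (∀ n : ℕ, ∫ x, x ^ n ∂ν = ∫ x, x ^ n ∂μ) → ν = μ

/-- The complex polynomial functions are dense in `L²(ν)`. -/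
def PolyDense (ν : Measure ℝ) : Prop :=
  Dense {f : Lp ℂ 2 ν | ∃ p : Polynomial ℂ, ⇑f =ᵐ[ν] fun x : ℝ => p.eval (x : ℂ)}


lemma aux_gron (h P : ℕ → ℝ) (H : ℝ) (hh : ∀ n, 0 ≤ h n)
    (hH : ∀ N, ∑ n ∈ Finset.range N, h n ^ 2 ≤ H)
    (hP : ∀ n, |P n| ≤ h n + 2 * h n * ∑ m ∈ Finset.range n, h m * |P m|) (N : ℕ) :
    ∑ n ∈ Finset.range N, P n ^ 2 ≤ H * (Real.exp (2 * H)) ^ 2 := by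
  have key : ∀ n, 1 + 2 * ∑ m ∈ Finset.range n, h m * |P m| ≤
      Real.exp (2 * ∑ m ∈ Finset.range n, h m ^ 2) := by
    intro n
    induction n with
    | zero => simp
    | succ n ih =>
      rw [Finset.sum_range_succ, Finset.sum_range_succ, mul_add 2 (∑ m ∈ Finset.range n, h m ^ 2),
        Real.exp_add]
      set T := ∑ m ∈ Finset.range n, h m * |P m|
      have hT : 0 ≤ T := Finset.sum_nonneg fun i _ => mul_nonneg (hh i) (abs_nonneg _)
      have h1 : h n * |P n| ≤ h n * (h n + 2 * h n * T) := mul_le_mul_of_nonneg_left (hP n) (hh n)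
      calc 1 + 2 * (T + h n * |P n|) ≤ (1 + 2 * T) * (2 * h n ^ 2 + 1) := by nlinarith
        _ ≤ _ := by
          apply mul_le_mul ih (Real.add_one_le_exp _) (by positivity) (by positivity)
  have key2 : ∀ n, |P n| ≤ h n * Real.exp (2 * H) := by
    intro n
    refine (hP n).trans ?_
    have h2 := (key n).trans (Real.exp_le_exp.2 (mul_le_mul_of_nonneg_left (hH n) zero_le_two))
    have := mul_le_mul_of_nonneg_left h2 (hh n)
    linarith
  calc ∑ n ∈ Finset.range N, P n ^ 2 ≤ ∑ n ∈ Finset.range N, h n ^ 2 * Real.exp (2 * H) ^ 2 := by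
        apply Finset.sum_le_sum
        intro i _
        rw [← mul_pow, ← sq_abs]
        exact pow_le_pow_left₀ (abs_nonneg _) (key2 i) 2
    _ ≤ _ := by
        rw [← Finset.sum_mul]
        exact mul_le_mul_of_nonneg_right (hH N) (by positivity)

lemma aux_op (L : ℝ[X] →ₗ[ℝ] ℝ) (hL : ∀ p, p ≠ 0 → 0 < L (p * p)) :
    ∃ P : ℕ → ℝ[X], (∀ n m, L (P n * P m) = if n = m then 1 else 0) ∧
      (∀ n : ℕ, ∀ q : ℝ[X], q.degree < n →
        ∃ c : ℕ → ℝ, q = ∑ m ∈ Finset.range n, c m • P m) ∧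
      ∀ n, (P n).degree < ((n + 1 : ℕ) : WithBot ℕ) := by
  let core : InnerProductSpace.Core ℝ ℝ[X] :=
    { inner := fun p q => L (p * q)
      conj_inner_symm := fun p q => by simp [mul_comm]
      re_inner_nonneg := fun p => by
        by_cases h : p = 0
        · simp [h]
        · exact (hL p h).le
      add_left := fun p q r => by simp [add_mul]
      smul_left := fun p q r => by simp
      definite := fun p hp => by
        by_contra h
        exact (hL p h).ne' hp }
  let _ := core.toNormedAddCommGroup
  let _ : InnerProductSpace ℝ ℝ[X] := InnerProductSpace.ofCore core.toCore
  have li : LinearIndependent ℝ (fun n : ℕ => (X : ℝ[X]) ^ n) := by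
    have := (Polynomial.basisMonomials ℝ).linearIndependent
    convert this using 2 with n
    simp [Polynomial.X_pow_eq_monomial]
  refine ⟨InnerProductSpace.gramSchmidtNormed ℝ (fun n : ℕ => (X : ℝ[X]) ^ n), ?_, ?_, ?_⟩
  · intro n m
    exact (orthonormal_iff_ite.1 (InnerProductSpace.gramSchmidtNormed_orthonormal li)) n m
  · intro n q hq
    have h1 : q ∈ Submodule.span ℝ ((fun n : ℕ => (X : ℝ[X]) ^ n) '' Set.Iio n) := by
      have := Polynomial.mem_degreeLT.2 hq
      rw [Polynomial.degreeLT_eq_span_X_pow] at this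
      simpa using this
    rw [← InnerProductSpace.span_gramSchmidt_Iio ℝ, ← InnerProductSpace.span_gramSchmidtNormed] at h1
    have : Set.Iio n = ((Finset.range n : Finset ℕ) : Set ℕ) := by ext; simp
    rw [this] at h1
    rw [Submodule.mem_span_image_finset_iff_exists_fun] at h1
    obtain ⟨c, hc⟩ := h1
    refine ⟨fun m => if h : m ∈ Finset.range n then c ⟨m, h⟩ else 0, ?_⟩
    rw [← hc, ← Finset.sum_coe_sort (Finset.range n)]
    apply Finset.sum_congr rfl
    rintro ⟨i, hi⟩ _
    dsimp only
    rw [dif_pos hi]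
  · intro n
    have h1 : InnerProductSpace.gramSchmidtNormed ℝ (fun n : ℕ => (X : ℝ[X]) ^ n) n ∈
        Submodule.span ℝ ((fun n : ℕ => (X : ℝ[X]) ^ n) '' Set.Iic n) := by
      rw [← InnerProductSpace.span_gramSchmidt_Iic ℝ, ← InnerProductSpace.span_gramSchmidtNormed]
      exact Submodule.subset_span ⟨n, by simp, rfl⟩
    rw [← Polynomial.mem_degreeLT, Polynomial.degreeLT_eq_span_X_pow]
    convert h1 using 2
    ext; simp

lemma aux_int {μ : Measure ℝ} (h : HasAllMoments μ) (p : ℝ[X]) :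
    Integrable (fun x => p.eval x) μ := by
  induction p using Polynomial.induction_on' with
  | add p q hp hq => simp only [eval_add]; exact hp.add hq
  | monomial n a =>
    simp only [eval_monomial]
    apply Integrable.const_mul
    refine (h n).mono' (by fun_prop) (ae_of_all _ fun x => by simp)

def aux_L (μ : Measure ℝ) (h : HasAllMoments μ) : ℝ[X] →ₗ[ℝ] ℝ where
  toFun p := ∫ x, p.eval x ∂μ
  map_add' p q := by
    simp only [eval_add]
    exact integral_add (aux_int h p) (aux_int h q)
  map_smul' c p := by
    simp [integral_const_mul]

lemma aux_L_apply (μ : Measure ℝ) (h : HasAllMoments μ) (p : ℝ[X]) :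
  aux_L μ h p = ∫ x, p.eval x ∂μ := rfl

lemma aux_fin {μ : Measure ℝ} (h : HasAllMoments μ) : IsFiniteMeasure μ := by
  have := h 0
  simp only [pow_zero] at this
  rw [integrable_const_iff] at this
  simpa using this

lemma aux_sumsq (L : ℝ[X] →ₗ[ℝ] ℝ) (P : ℕ → ℝ[X])
    (hP : ∀ n m, L (P n * P m) = if n = m then 1 else 0) (c : ℕ → ℝ) (N : ℕ) (m : ℕ) :
    L ((∑ n ∈ Finset.range N, c n • P n) * P m) = if m < N then c m else 0 := by
  simp [Finset.sum_mul, hP]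

lemma aux_sumsq2 (L : ℝ[X] →ₗ[ℝ] ℝ) (P : ℕ → ℝ[X])
    (hP : ∀ n m, L (P n * P m) = if n = m then 1 else 0) (c : ℕ → ℝ) (N : ℕ)  :
    L ((∑ n ∈ Finset.range N, c n • P n) * (∑ n ∈ Finset.range N, c n • P n)) =
      ∑ n ∈ Finset.range N, c n ^ 2 := by
  rw [Finset.mul_sum, map_sum]
  apply Finset.sum_congr rfl
  intro m hm
  rw [mul_smul_comm, map_smul, aux_sumsq L P hP, if_pos (Finset.mem_range.1 hm)]
  simp [sq]

lemma aux_bint {μ : Measure ℝ} (h : HasAllMoments μ) (p : ℝ[X]) (f : ℝ → ℝ) (hf : Measurable f)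
    (hb : ∀ x, |f x| ≤ 1) : Integrable (fun x => p.eval x * f x) μ :=
  (aux_int h p).mul_bdd (c := 1) hf.aestronglyMeasurable (ae_of_all _ fun x => by simpa using hb x)

lemma aux_bessel {μ : Measure ℝ} (h : HasAllMoments μ) (P : ℕ → ℝ[X])
    (hP : ∀ n m, aux_L μ h (P n * P m) = if n = m then 1 else 0)
    (f : ℝ → ℝ) (hf : Measurable f) (hb : ∀ x, |f x| ≤ 1) (N : ℕ) :
    ∑ n ∈ Finset.range N, (∫ x, (P n).eval x * f x ∂μ) ^ 2 ≤ ∫ x, f x ^ 2 ∂μ := by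
  have := aux_fin h
  set c : ℕ → ℝ := fun n => ∫ x, (P n).eval x * f x ∂μ with hc
  set S := ∑ n ∈ Finset.range N, c n • P n with hS
  have h1 := aux_sumsq2 _ P hP c N
  rw [← hS, aux_L_apply] at h1
  have h2 : ∫ x, S.eval x * f x ∂μ = ∑ n ∈ Finset.range N, c n ^ 2 := by
    have : ∀ x, S.eval x * f x = ∑ n ∈ Finset.range N, c n * ((P n).eval x * f x) := by
      intro x
      rw [hS, eval_finsetSum, Finset.sum_mul]
      apply Finset.sum_congr rfl
      intro i _
      simp [mul_assoc]
    simp_rw [this]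
    rw [integral_finsetSum]
    · apply Finset.sum_congr rfl
      intro i _
      rw [integral_const_mul, sq]
    · intro i _
      exact (aux_bint h _ f hf hb).const_mul _
  have hf2 : Integrable (fun x => f x ^ 2) μ := by
    refine Integrable.of_bound (C := 1) (by fun_prop) (ae_of_all _ fun x => ?_)
    simpa using hb x
  have h3 : 0 ≤ ∫ x, (f x - S.eval x) ^ 2 ∂μ := integral_nonneg fun x => sq_nonneg _
  have h4 : ∫ x, (f x - S.eval x) ^ 2 ∂μ = ∫ x, f x ^ 2 ∂μ - 2 * ∫ x, S.eval x * f x ∂μ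
      + ∫ x, (S * S).eval x ∂μ := by
    have hi := (aux_bint h S f hf hb).const_mul 2
    have hi2 : Integrable (fun x => f x ^ 2 - 2 * (S.eval x * f x)) μ := hf2.sub hi
    rw [← integral_const_mul, ← integral_sub hf2 hi, ← integral_add hi2 (aux_int h _)]
    congr 1; ext x; simp; ring
  linarith
lemma aux_div (p : ℝ[X]) : ∃ I : ℝ[X], ∃ a b : ℝ, p = (X ^ 2 + 1) * I + C b * X + C a := by
  induction p using Polynomial.induction_on' with
  | add p q hp hq =>
    obtain ⟨I, a, b, h⟩ := hp
    obtain ⟨J, c, d, h'⟩ := hq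
    refine ⟨I + J, a + c, b + d, ?_⟩
    rw [h, h']; simp only [C_add]; ring
  | monomial n r =>
    induction n with
    | zero => exact ⟨0, r, 0, by simp⟩
    | succ n ih =>
      obtain ⟨I, a, b, h⟩ := ih
      refine ⟨X * I + C b, -b, a, ?_⟩
      rw [← monomial_mul_X, h]; simp only [C_neg]; ring

lemma aux_deg (p I : ℝ[X]) (a b : ℝ) (n : ℕ) (h : p = (X ^ 2 + 1) * I + C b * X + C a)
    (hp : p.degree < ((n + 1 : ℕ) : WithBot ℕ)) : I.degree < n := by
  by_cases hI : I = 0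
  · simp [hI]
  by_contra hcon
  have hn : (n : ℕ) ≤ I.natDegree := by
    rw [degree_eq_natDegree hI] at hcon
    exact_mod_cast not_lt.1 hcon
  have hc : p.coeff (I.natDegree + 2) = I.leadingCoeff := by
    have e : p = I * X ^ 2 + I + C b * X + C a := by rw [h]; ring
    rw [e]
    simp only [coeff_add, coeff_mul_X_pow, coeff_natDegree, coeff_C_succ]
    rw [coeff_eq_zero_of_natDegree_lt (p := I) (by omega),
      show I.natDegree + 2 = (I.natDegree + 1) + 1 from rfl, coeff_mul_X]
    simp
  have h0 : p.coeff (I.natDegree + 2) = 0 := by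
    apply coeff_eq_zero_of_degree_lt
    refine hp.trans_le ?_
    exact_mod_cast (by omega : n + 1 ≤ I.natDegree + 2)
  rw [hc] at h0
  exact hI (leadingCoeff_eq_zero.1 h0)

lemma aux_cs {K S : ℝ} (hK : 0 ≤ K) (h : S ^ 2 ≤ K * S) : S ≤ K := by
  by_contra hc
  push Not at hc
  nlinarith

lemma aux_local {μ : Measure ℝ} (h : HasAllMoments μ)
    (hpd : ∀ p, p ≠ 0 → 0 < aux_L μ h (p * p)) (K : ℝ) (hK0 : 0 ≤ K)
    (hK : ∀ (p I : ℝ[X]) (a b : ℝ), p = (X ^ 2 + 1) * I + C b * X + C a →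
      a ^ 2 + b ^ 2 ≤ K * aux_L μ h (p * p)) :
    ∃ M, 0 ≤ M ∧ ∀ (p : ℝ[X]) (x : ℝ), |x| ≤ 1 → p.eval x ^ 2 ≤ M * aux_L μ h (p * p) := by
  obtain ⟨P, hP, hexp, hdeg⟩ := aux_op _ hpd
  choose I a b hI using fun n => aux_div (P n)
  have hIdeg : ∀ n, (I n).degree < n := fun n => aux_deg _ _ _ _ _ (hI n) (hdeg n)
  set f1 : ℝ → ℝ := fun x => x / (x ^ 2 + 1) with hf1
  set f2 : ℝ → ℝ := fun x => 1 / (x ^ 2 + 1) with hf2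
  have m1 : Measurable f1 := by fun_prop
  have m2 : Measurable f2 := by fun_prop
  have b1 : ∀ x, |f1 x| ≤ 1 := by
    intro x
    rw [hf1]; simp only
    rw [abs_div, abs_of_pos (by positivity : 0 < x ^ 2 + 1), div_le_one (by positivity)]
    rcases abs_cases x with ⟨h, _⟩ | ⟨h, _⟩ <;> rw [h] <;> nlinarith [sq_nonneg (x - 1), sq_nonneg (x + 1)]
  have b2 : ∀ x, |f2 x| ≤ 1 := by
    intro x
    rw [hf2]; simp only
    rw [abs_div, abs_of_pos (by positivity : 0 < x ^ 2 + 1), div_le_one (by positivity)]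
    simp; positivity
  set f : ℕ → ℝ := fun n => ∫ x, (P n).eval x * f1 x ∂μ with hf
  set g : ℕ → ℝ := fun n => ∫ x, (P n).eval x * f2 x ∂μ with hg
  have hSf : ∀ N, ∑ n ∈ Finset.range N, f n ^ 2 ≤ ∫ x, f1 x ^ 2 ∂μ :=
    fun N => aux_bessel h P hP f1 m1 b1 N
  have hSg : ∀ N, ∑ n ∈ Finset.range N, g n ^ 2 ≤ ∫ x, f2 x ^ 2 ∂μ :=
    fun N => aux_bessel h P hP f2 m2 b2 N
  have hcomb : ∀ (c : ℕ → ℝ) N, ∑ n ∈ Finset.range N, c n • P n =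
      (X ^ 2 + 1) * (∑ n ∈ Finset.range N, c n • I n) + C (∑ n ∈ Finset.range N, c n * b n) * X
        + C (∑ n ∈ Finset.range N, c n * a n) := by
    intro c N
    rw [map_sum, map_sum, Finset.mul_sum, Finset.sum_mul, ← Finset.sum_add_distrib,
      ← Finset.sum_add_distrib]
    apply Finset.sum_congr rfl
    intro i _
    conv_lhs => rw [hI i]
    simp only [smul_eq_C_mul, C_mul]; ring
  have hSa : ∀ N, ∑ n ∈ Finset.range N, a n ^ 2 ≤ K := by
    intro N
    have h1 := hK _ _ _ _ (hcomb a N)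
    rw [aux_sumsq2 _ P hP] at h1
    apply aux_cs hK0
    refine le_trans ?_ h1
    have : ∑ n ∈ Finset.range N, a n * a n = ∑ n ∈ Finset.range N, a n ^ 2 := by simp only [sq]
    rw [this]
    linarith [sq_nonneg (∑ n ∈ Finset.range N, a n * b n)]
  have hSb : ∀ N, ∑ n ∈ Finset.range N, b n ^ 2 ≤ K := by
    intro N
    have h1 := hK _ _ _ _ (hcomb b N)
    rw [aux_sumsq2 _ P hP] at h1
    apply aux_cs hK0
    refine le_trans ?_ h1
    have : ∑ n ∈ Finset.range N, b n * b n = ∑ n ∈ Finset.range N, b n ^ 2 := by simp only [sq]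
    rw [this]
    linarith [sq_nonneg (∑ n ∈ Finset.range N, b n * a n)]
  set H : ℝ := 4 * (K + K + ∫ x, f1 x ^ 2 ∂μ + ∫ x, f2 x ^ 2 ∂μ) with hH
  set hh : ℕ → ℝ := fun n => |a n| + |b n| + |f n| + |g n| with hhh
  have hh0 : ∀ n, 0 ≤ hh n := fun n => by positivity
  have hhH : ∀ N, ∑ n ∈ Finset.range N, hh n ^ 2 ≤ H := by
    intro N
    calc ∑ n ∈ Finset.range N, hh n ^ 2 ≤
        ∑ n ∈ Finset.range N, 4 * (a n ^ 2 + b n ^ 2 + f n ^ 2 + g n ^ 2) := by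
          apply Finset.sum_le_sum
          intro n _
          rw [← sq_abs (a n), ← sq_abs (b n), ← sq_abs (f n), ← sq_abs (g n)]
          simp only [hhh]
          nlinarith [sq_nonneg (|a n| - |b n|), sq_nonneg (|a n| - |f n|), sq_nonneg (|a n| - |g n|),
            sq_nonneg (|b n| - |f n|), sq_nonneg (|b n| - |g n|), sq_nonneg (|f n| - |g n|)]
      _ ≤ H := by
          rw [← Finset.mul_sum]
          simp only [Finset.sum_add_distrib]
          linarith [hSa N, hSb N, hSf N, hSg N]
  have horth : ∀ (n : ℕ) (q : ℝ[X]), q.degree < n → aux_L μ h (P n * q) = 0 := by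
    intro n q hq
    obtain ⟨c, hc⟩ := hexp n q hq
    rw [mul_comm, hc, aux_sumsq _ P hP]
    simp
  have hcoef : ∀ n m, m < n → aux_L μ h (I n * P m) =
      b m * f n + a m * g n - b n * f m - a n * g m := by
    intro n m hmn
    have e0 := horth n (I m) ((hIdeg m).trans (by exact_mod_cast hmn))
    have ev : ∀ n x, (P n).eval x = (x ^ 2 + 1) * (I n).eval x + b n * x + a n := by
      intro n x
      conv_lhs => rw [hI n]
      simp
    have e1 : ∀ x, (I n * P m).eval x = (P n * I m).eval x + b m * ((P n).eval x * f1 x)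
        + a m * ((P n).eval x * f2 x) - b n * ((P m).eval x * f1 x)
        - a n * ((P m).eval x * f2 x) := by
      intro x
      simp only [eval_mul, hf1, hf2]
      rw [ev n, ev m]
      have : x ^ 2 + 1 ≠ 0 := by positivity
      field_simp
      ring
    rw [aux_L_apply] at e0 ⊢
    simp_rw [e1]
    have i0 := aux_int h (P n * I m)
    have i1 := (aux_bint h (P n) f1 m1 b1).const_mul (b m)
    have i2 := (aux_bint h (P n) f2 m2 b2).const_mul (a m)
    have i3 := (aux_bint h (P m) f1 m1 b1).const_mul (b n)
    have i4 := (aux_bint h (P m) f2 m2 b2).const_mul (a n)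
    rw [integral_sub (by fun_prop) i4, integral_sub (by fun_prop) i3,
      integral_add (by fun_prop) i2, integral_add i0 i1, e0]
    simp only [integral_const_mul, hf, hg]
    ring
  have hbd : ∀ x : ℝ, |x| ≤ 1 → ∀ n, |(P n).eval x| ≤ hh n + 2 * hh n *
      ∑ m ∈ Finset.range n, hh m * |(P m).eval x| := by
    intro x hx n
    obtain ⟨c, hc⟩ := hexp n (I n) (hIdeg n)
    have hcm : ∀ m ∈ Finset.range n, |c m| ≤ hh n * hh m := by
      intro m hm
      have hm' := Finset.mem_range.1 hm
      have e := aux_sumsq _ P hP c n m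
      rw [if_pos hm', ← hc, hcoef n m hm'] at e
      rw [← e]
      have t : |b m * f n + a m * g n - b n * f m - a n * g m| ≤
          |b m| * |f n| + |a m| * |g n| + |b n| * |f m| + |a n| * |g m| := by
        simp only [← abs_mul]
        refine (abs_sub _ _).trans ?_
        gcongr
        refine (abs_sub _ _).trans ?_
        gcongr
        exact abs_add_le _ _
      refine t.trans ?_
      simp only [hhh]
      have q1 := abs_nonneg (a n)
      have q2 := abs_nonneg (b n)
      have q3 := abs_nonneg (f n)
      have q4 := abs_nonneg (g n)
      have q5 := abs_nonneg (a m)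
      have q6 := abs_nonneg (b m)
      have q7 := abs_nonneg (f m)
      have q8 := abs_nonneg (g m)
      rw [← sub_nonneg]
      ring_nf
      positivity
    have hx2 : x ^ 2 ≤ 1 := by rw [← sq_abs]; nlinarith [abs_nonneg x]
    have e1 : (P n).eval x = (x ^ 2 + 1) * (I n).eval x + b n * x + a n := by
      conv_lhs => rw [hI n]
      simp
    have e2 : |(I n).eval x| ≤ hh n * ∑ m ∈ Finset.range n, hh m * |(P m).eval x| := by
      rw [hc, eval_finsetSum, Finset.mul_sum]
      refine (Finset.abs_sum_le_sum_abs _ _).trans (Finset.sum_le_sum fun m hm => ?_)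
      rw [eval_smul, smul_eq_mul, abs_mul, ← mul_assoc]
      exact mul_le_mul_of_nonneg_right (hcm m hm) (abs_nonneg _)
    have e3 : |b n * x + a n| ≤ hh n := by
      refine (abs_add_le _ _).trans ?_
      rw [abs_mul]
      have : |b n| * |x| ≤ |b n| := mul_le_of_le_one_right (abs_nonneg _) hx
      simp only [hhh]
      linarith [abs_nonneg (f n), abs_nonneg (g n)]
    rw [e1, add_assoc]
    refine (abs_add_le _ _).trans ?_
    rw [abs_mul, abs_of_pos (by positivity : 0 < x ^ 2 + 1)]
    have := mul_le_mul (by linarith : x ^ 2 + 1 ≤ 2) e2 (abs_nonneg _) (by norm_num)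
    linarith
  have hH0 : 0 ≤ H := by simpa using hhH 0
  refine ⟨H * Real.exp (2 * H) ^ 2, by positivity, fun p x hx => ?_⟩
  have hg := aux_gron hh (fun n => (P n).eval x) H hh0 hhH (hbd x hx) (p.natDegree + 1)
  obtain ⟨c, hc⟩ := hexp (p.natDegree + 1) p
    (degree_le_natDegree.trans_lt (by exact_mod_cast Nat.lt_succ_self _))
  have e1 := aux_sumsq2 _ P hP c (p.natDegree + 1)
  rw [← hc] at e1
  have e2 : p.eval x = ∑ n ∈ Finset.range (p.natDegree + 1), c n * (P n).eval x := by
    conv_lhs => rw [hc]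
    simp [eval_finsetSum]
  rw [e1, e2]
  refine (Finset.sum_mul_sq_le_sq_mul_sq _ _ _).trans ?_
  rw [mul_comm]
  exact mul_le_mul_of_nonneg_right hg (Finset.sum_nonneg fun i _ => sq_nonneg _)

def aux_U (x : ℝ) : ℂ := ((x : ℂ) - Complex.I)⁻¹

lemma aux_ne (x : ℝ) : (x : ℂ) - Complex.I ≠ 0 := by
  intro h
  have := congrArg Complex.im h
  simp at this

lemma aux_ne' (x : ℝ) : (x : ℂ) + Complex.I ≠ 0 := by
  intro h
  have := congrArg Complex.im h
  simp at this

lemma aux_U_cont : Continuous aux_U := by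
  unfold aux_U
  exact Continuous.inv₀ (by fun_prop) aux_ne

lemma aux_U_norm (x : ℝ) : ‖aux_U x‖ ≤ 1 := by
  unfold aux_U
  rw [norm_inv]
  apply inv_le_one_of_one_le₀
  have := Complex.abs_im_le_norm ((x : ℂ) - Complex.I)
  simpa using this

lemma aux_U_pow_norm (x : ℝ) (k : ℕ) : ‖aux_U x ^ k‖ ≤ 1 := by
  rw [norm_pow]
  exact pow_le_one₀ (norm_nonneg _) (aux_U_norm x)

lemma aux_U_star (x : ℝ) : star (aux_U x) = ((x : ℂ) + Complex.I)⁻¹ := by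
  unfold aux_U
  simp [sub_eq_add_neg]

lemma aux_U_mul (x : ℝ) : aux_U x * star (aux_U x) =
    (1 / (2 * Complex.I)) * (aux_U x - star (aux_U x)) := by
  rw [aux_U_star, aux_U]
  have := aux_ne x
  have := aux_ne' x
  have := Complex.I_ne_zero
  field_simp
  ring

open BoundedContinuousFunction in
lemma aux_unique (P Q : Measure ℝ) [IsFiniteMeasure P] [IsFiniteMeasure Q]
    (h : ∀ k : ℕ, ∫ x, aux_U x ^ k ∂P = ∫ x, aux_U x ^ k ∂Q) : P = Q := by
  let u : ℝ →ᵇ ℂ := BoundedContinuousFunction.ofNormedAddCommGroup aux_U aux_U_cont 1 aux_U_norm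
  have hu : ∀ x, u x = aux_U x := fun x => rfl
  have hint : ∀ (R : Measure ℝ) [IsFiniteMeasure R] (w : ℝ →ᵇ ℂ), Integrable (fun x => w x) R :=
    fun R _ w => w.integrable R
  have hstar : ∀ k : ℕ, ∫ x, star (aux_U x) ^ k ∂P = ∫ x, star (aux_U x) ^ k ∂Q := by
    intro k
    have e : ∀ ρ : Measure ℝ, ∫ x, star (aux_U x) ^ k ∂ρ = star (∫ x, aux_U x ^ k ∂ρ) := by
      intro ρ
      have := integral_conj (μ := ρ) (f := fun x => aux_U x ^ k)
      simpa using this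
    rw [e, e, h]
  have hjk : ∀ N j k : ℕ, j + k ≤ N →
      ∫ x, (u ^ j * star u ^ k) x ∂P = ∫ x, (u ^ j * star u ^ k) x ∂Q := by
    intro N
    induction N with
    | zero =>
      intro j k hjk
      obtain ⟨rfl, rfl⟩ : j = 0 ∧ k = 0 := by omega
      simpa using h 0
    | succ N ih =>
      intro j k hjk
      rcases j with _ | j
      · simpa [hu] using hstar k
      rcases k with _ | k
      · simpa [hu] using h (j + 1)
      have e : ∀ x, (u ^ (j + 1) * star u ^ (k + 1)) x =
          (1 / (2 * Complex.I)) * ((u ^ (j + 1) * star u ^ k) x - (u ^ j * star u ^ (k + 1)) x) := by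
        intro x
        have := aux_U_mul x
        simp only [BoundedContinuousFunction.coe_mul, BoundedContinuousFunction.coe_pow, Pi.mul_apply, Pi.pow_apply, BoundedContinuousFunction.star_apply, hu]
        calc _ = aux_U x ^ j * star (aux_U x) ^ k * (aux_U x * star (aux_U x)) := by ring
          _ = _ := by rw [this]; ring
      simp_rw [e]
      rw [integral_const_mul, integral_const_mul, integral_sub (hint P _) (hint P _),
        integral_sub (hint Q _) (hint Q _), ih (j + 1) k (by omega), ih j (k + 1) (by omega)]
  apply ext_of_forall_mem_subalgebra_integral_eq_of_polish (𝕜 := ℂ) (A := StarAlgebra.adjoin ℂ {u})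
  · intro x y hxy
    refine ⟨aux_U, ⟨toContinuousMapStarₐ ℂ u, ⟨u, StarAlgebra.subset_adjoin ℂ {u} rfl, rfl⟩, rfl⟩, ?_⟩
    intro hU
    apply hxy
    unfold aux_U at hU
    have := inv_injective hU
    simpa using this
  · intro w hw
    have hw' : w ∈ (StarAlgebra.adjoin ℂ {u}).toSubalgebra := hw
    rw [StarAlgebra.adjoin_toSubalgebra, Set.star_singleton, Set.singleton_union,
      ← Subalgebra.mem_toSubmodule, Algebra.adjoin_eq_span] at hw'
    clear hw
    induction hw' using Submodule.span_induction with
    | mem w hw' =>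
      obtain ⟨j, k, rfl⟩ := (Submonoid.mem_closure_pair _ _ _).1 hw'
      exact hjk _ j k le_rfl
    | zero => simp
    | add v w _ _ hv hw =>
      simp only [BoundedContinuousFunction.coe_add, Pi.add_apply]
      rw [integral_add (hint P _) (hint P _), integral_add (hint Q _) (hint Q _), hv, hw]
    | smul c w _ hw =>
      simp only [BoundedContinuousFunction.coe_smul]
      rw [integral_smul, integral_smul, hw]

lemma aux_cint {μ : Measure ℝ} (h : HasAllMoments μ) (q : ℂ[X]) :
    Integrable (fun x : ℝ => q.eval (x : ℂ)) μ := by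
  induction q using Polynomial.induction_on' with
  | add p q hp hq => simp only [eval_add]; exact hp.add hq
  | monomial n a =>
    simp only [eval_monomial]
    apply Integrable.const_mul
    refine (h n).mono' (by fun_prop) (ae_of_all _ fun x => by simp)

lemma aux_cintU {μ : Measure ℝ} (h : HasAllMoments μ) (q : ℂ[X]) (k : ℕ) :
    Integrable (fun x : ℝ => q.eval (x : ℂ) * aux_U x ^ k) μ :=
  (aux_cint h q).mul_bdd (c := 1) (aux_U_cont.pow k).aestronglyMeasurable
    (ae_of_all _ fun x => aux_U_pow_norm x k)

lemma aux_cmom {σ ν : Measure ℝ} (hσ : HasAllMoments σ) (hν : HasAllMoments ν)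
    (heq : ∀ n : ℕ, ∫ x, x ^ n ∂ν = ∫ x, x ^ n ∂σ) (q : ℂ[X]) :
    ∫ x : ℝ, q.eval (x : ℂ) ∂ν = ∫ x : ℝ, q.eval (x : ℂ) ∂σ := by
  induction q using Polynomial.induction_on' with
  | add p q hp hq =>
    simp only [eval_add]
    rw [integral_add (aux_cint hν _) (aux_cint hν _), integral_add (aux_cint hσ _) (aux_cint hσ _),
      hp, hq]
  | monomial n a =>
    simp only [eval_monomial, ← Complex.ofReal_pow]
    rw [integral_const_mul, integral_const_mul, integral_complex_ofReal, integral_complex_ofReal,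
      heq]

lemma aux_mom {σ ν : Measure ℝ} (hσ : HasAllMoments σ) (hν : HasAllMoments ν)
    (heq : ∀ n : ℕ, ∫ x, x ^ n ∂ν = ∫ x, x ^ n ∂σ) (q : ℝ[X]) :
    ∫ x : ℝ, q.eval x ∂ν = ∫ x : ℝ, q.eval x ∂σ := by
  induction q using Polynomial.induction_on' with
  | add p q hp hq =>
    simp only [eval_add]
    rw [integral_add (aux_int hν _) (aux_int hν _), integral_add (aux_int hσ _) (aux_int hσ _),
      hp, hq]
  | monomial n a =>
    simp only [eval_monomial]
    rw [integral_const_mul, integral_const_mul, heq]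

/-- splitting at `i` -/
lemma aux_split {μ : Measure ℝ} (h : HasAllMoments μ) (q : ℂ[X]) (k : ℕ) :
    ∫ x : ℝ, q.eval (x : ℂ) * aux_U x ^ (k + 1) ∂μ =
      q.eval Complex.I * ∫ x : ℝ, aux_U x ^ (k + 1) ∂μ +
      ∫ x : ℝ, (q /ₘ (X - C Complex.I)).eval (x : ℂ) * aux_U x ^ k ∂μ := by
  have e : ∀ x : ℝ, q.eval (x : ℂ) * aux_U x ^ (k + 1) = q.eval Complex.I * aux_U x ^ (k + 1) +
      (q /ₘ (X - C Complex.I)).eval (x : ℂ) * aux_U x ^ k := by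
    intro x
    have h1 := congrArg (eval (x : ℂ)) (modByMonic_add_div q (X - C Complex.I))
    rw [modByMonic_X_sub_C_eq_C_eval] at h1
    simp only [eval_add, eval_C, eval_mul, eval_sub, eval_X] at h1
    have h2 : ((x : ℂ) - Complex.I) * aux_U x = 1 := mul_inv_cancel₀ (aux_ne x)
    rw [← h1, add_mul]
    congr 1
    rw [pow_succ]
    linear_combination (eval (x : ℂ) (q /ₘ (X - C Complex.I)) * aux_U x ^ k) * h2
  simp_rw [e]
  have i1 : Integrable (fun x : ℝ => q.eval Complex.I * aux_U x ^ (k + 1)) μ := by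
    simpa using aux_cintU h (C (q.eval Complex.I)) (k + 1)
  rw [integral_add i1 (aux_cintU h _ _), integral_const_mul]

lemma aux_evalbd {σ ν : Measure ℝ} (hσ : HasAllMoments σ) (hν : HasAllMoments ν)
    (heq : ∀ n : ℕ, ∫ x, x ^ n ∂ν = ∫ x, x ^ n ∂σ) (hne : ν ≠ σ) :
    ∃ K, 0 ≤ K ∧ ∀ (p I : ℝ[X]) (a b : ℝ), p = (X ^ 2 + 1) * I + C b * X + C a →
      a ^ 2 + b ^ 2 ≤ K * aux_L σ hσ (p * p) := by
  classical
  have := aux_fin hσ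
  have := aux_fin hν
  have hex : ∃ k : ℕ, ∫ x, aux_U x ^ k ∂ν ≠ ∫ x, aux_U x ^ k ∂σ := by
    by_contra hc
    push Not at hc
    exact hne (aux_unique _ _ hc)
  obtain ⟨k, hk⟩ : ∃ k, Nat.find hex = k + 1 := by
    refine Nat.exists_eq_succ_of_ne_zero fun h0 => ?_
    have := Nat.find_spec hex
    rw [h0] at this
    apply this
    have := aux_cmom hσ hν heq 1
    simpa using this
  have hspec := Nat.find_spec hex
  rw [hk] at hspec
  have hmin : ∀ j ≤ k, ∫ x, aux_U x ^ j ∂ν = ∫ x, aux_U x ^ j ∂σ := by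
    intro j hj
    have := Nat.find_min hex (m := j) (by omega)
    simpa using this
  have hS : ∀ j ≤ k, ∀ q : ℂ[X], ∫ x : ℝ, q.eval (x : ℂ) * aux_U x ^ j ∂ν =
      ∫ x : ℝ, q.eval (x : ℂ) * aux_U x ^ j ∂σ := by
    intro j
    induction j with
    | zero => intro _ q; simpa using aux_cmom hσ hν heq q
    | succ j ih =>
      intro hj q
      rw [aux_split hσ, aux_split hν, hmin _ hj, ih (by omega)]
  set G : ℂ := ∫ x, aux_U x ^ (k + 1) ∂ν - ∫ x, aux_U x ^ (k + 1) ∂σ with hG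
  have hG0 : 0 < ‖G‖ := norm_pos_iff.2 (sub_ne_zero.2 hspec)
  have hkey : ∀ p : ℝ[X], ‖(p.map Complex.ofRealHom).eval Complex.I‖ * ‖G‖ ≤
      ∫ x, (1 + (p * p).eval x) ∂σ := by
    intro p
    set q := p.map Complex.ofRealHom with hq
    have hqx : ∀ x : ℝ, q.eval (x : ℂ) = ((p.eval x : ℝ) : ℂ) := by
      intro x
      rw [hq, eval_map]
      exact (Polynomial.hom_eval₂ p (RingHom.id ℝ) Complex.ofRealHom x).symm
    have e : q.eval Complex.I * G = ∫ x : ℝ, q.eval (x : ℂ) * aux_U x ^ (k + 1) ∂ν -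
        ∫ x : ℝ, q.eval (x : ℂ) * aux_U x ^ (k + 1) ∂σ := by
      rw [aux_split hσ, aux_split hν, hS k le_rfl, hG]; ring
    have hb : ∀ ρ : Measure ℝ, HasAllMoments ρ →
        ‖∫ x : ℝ, q.eval (x : ℂ) * aux_U x ^ (k + 1) ∂ρ‖ ≤ ∫ x, (C (1/2) * (1 + p * p)).eval x ∂ρ := by
      intro ρ hρ
      refine norm_integral_le_of_norm_le (aux_int hρ _) (ae_of_all _ fun x => ?_)
      rw [norm_mul, hqx]
      refine (mul_le_of_le_one_right (norm_nonneg _) (aux_U_pow_norm _ _)).trans ?_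
      simp only [Complex.norm_real, Real.norm_eq_abs, eval_mul, eval_add, eval_C, eval_one]
      nlinarith [sq_nonneg (|p.eval x| - 1), sq_abs (p.eval x)]
    rw [← norm_mul, e]
    refine (norm_sub_le _ _).trans ?_
    refine (add_le_add (hb ν hν) (hb σ hσ)).trans ?_
    rw [aux_mom hσ hν heq, ← integral_add (aux_int hσ _) (aux_int hσ _)]
    apply le_of_eq
    congr 1; ext x; simp; ring
  set m0 := ∫ x, (1 : ℝ) ∂σ with hm0
  have hm0' : 0 ≤ m0 := integral_nonneg fun _ => zero_le_one
  refine ⟨4 * m0 / ‖G‖ ^ 2, by positivity, fun p I a b hp => ?_⟩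
  set w := (p.map Complex.ofRealHom).eval Complex.I with hw
  have hw1 : w = a + b * Complex.I := by
    rw [hw, hp]
    simp [Polynomial.map_add, Polynomial.map_mul, Complex.I_sq]
    ring
  have hw2 : ‖w‖ ^ 2 = a ^ 2 + b ^ 2 := by
    rw [hw1, Complex.sq_norm, Complex.normSq_add_mul_I]
  have hd : ∀ t : ℝ, 0 ≤ aux_L σ hσ (p * p) * (t * t) + (-(‖w‖ * ‖G‖)) * t + m0 := by
    intro t
    have h1 := hkey (C t * p)
    have h2 : ∫ x, (1 + ((C t * p) * (C t * p)).eval x) ∂σ = m0 + t * t * aux_L σ hσ (p * p) := by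
      rw [integral_add (by fun_prop) (aux_int hσ _), aux_L_apply, ← integral_const_mul]
      congr 2; ext x; simp; ring
    rw [h2, Polynomial.map_mul, eval_mul, ← hw, norm_mul] at h1
    simp only [map_C, eval_C, Complex.ofRealHom_eq_coe, Complex.norm_real, Real.norm_eq_abs] at h1
    have h3 : t * (‖w‖ * ‖G‖) ≤ |t| * (‖w‖ * ‖G‖) :=
      mul_le_mul_of_nonneg_right (le_abs_self t) (by positivity)
    linarith
  have := discrim_le_zero hd
  unfold discrim at this
  rw [← hw2, div_mul_eq_mul_div, le_div_iff₀ (by positivity)]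
  nlinarith

lemma aux_nonneg (L : ℝ[X] →ₗ[ℝ] ℝ) (hL : ∀ p, 0 ≤ L (p * p)) :
    ∀ (n : ℕ) (p : ℝ[X]), p.natDegree ≤ n → (∀ x, 0 ≤ p.eval x) → ∀ s, 0 ≤ L (s * s * p) := by
  intro n
  induction n with
  | zero =>
    intro p hp h0 s
    rw [eq_C_of_natDegree_le_zero hp, mul_comm, ← smul_eq_C_mul, map_smul, smul_eq_mul]
    have := h0 0
    rw [← coeff_zero_eq_eval_zero] at this
    exact mul_nonneg this (hL s)
  | succ n ih =>
    intro p hp h0 s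
    by_cases hd : p.natDegree = 0
    · exact ih p (by omega) h0 s
    have hpos : 0 < p.degree := natDegree_pos_iff_degree_pos.1 (Nat.pos_of_ne_zero hd)
    have ht : Tendsto (fun x : ℝ => p.eval x) (cocompact ℝ) atTop := by
      have := p.tendsto_norm_atTop hpos (z := id) (l := cocompact ℝ) tendsto_norm_cocompact_atTop
      refine this.congr fun x => ?_
      simp [abs_of_nonneg (h0 x)]
    obtain ⟨a, ha⟩ := p.continuous.exists_forall_le ht
    set r := p - C (p.eval a) with hr
    have hr0 : r.eval a = 0 := by simp [hr]
    obtain ⟨r1, hr1⟩ := dvd_iff_isRoot.2 hr0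
    have hder : p.derivative.eval a = 0 := by
      have hm : IsLocalMin (fun x => p.eval x) a := Filter.Eventually.of_forall ha
      exact hm.hasDerivAt_eq_zero (p.hasDerivAt a)
    have hr1a : r1.eval a = 0 := by
      have h1 : r.derivative = p.derivative := by simp [hr]
      rw [← h1, hr1] at hder
      simpa using hder
    obtain ⟨q, hq⟩ := dvd_iff_isRoot.2 hr1a
    have hrq : r = (X - C a) * (X - C a) * q := by rw [hr1, hq, mul_assoc]
    have hp2 : p = C (p.eval a) + (X - C a) * (X - C a) * q := by rw [← hrq, hr]; ring
    have hq0 : ∀ x, 0 ≤ q.eval x := by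
      have hcl : IsClosed {x | 0 ≤ q.eval x} := isClosed_le continuous_const q.continuous
      have hsub : ({a}ᶜ : Set ℝ) ⊆ {x | 0 ≤ q.eval x} := by
        intro x hx
        have hxa : x - a ≠ 0 := sub_ne_zero.2 hx
        have h1 := ha x
        have h2 := congrArg (eval x) hp2
        simp only [eval_add, eval_mul, eval_sub, eval_C, eval_X] at h2
        have h3 : 0 ≤ (x - a) * (x - a) * q.eval x := by linarith
        have h4 : 0 < (x - a) * (x - a) := mul_self_pos.2 hxa
        exact nonneg_of_mul_nonneg_right h3 h4
      intro x
      have := hcl.closure_subset_iff.2 hsub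
      rw [(dense_compl_singleton a).closure_eq] at this
      exact this (Set.mem_univ x)
    have hqd : q.natDegree ≤ n := by
      by_cases hqz : q = 0
      · simp [hqz]
      have h1 : r.natDegree ≤ n + 1 := by
        rw [hr]; simpa using hp
      have hX : (X - C a : ℝ[X]) ≠ 0 := X_sub_C_ne_zero a
      rw [hrq, natDegree_mul (mul_ne_zero hX hX) hqz, natDegree_mul hX hX] at h1
      simp only [natDegree_X_sub_C] at h1
      omega
    have e : s * s * p = (p.eval a) • (s * s) + (s * (X - C a)) * (s * (X - C a)) * q := by
      conv_lhs => rw [hp2]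
      rw [smul_eq_C_mul]; ring
    rw [e, map_add, map_smul, smul_eq_mul]
    exact add_nonneg (mul_nonneg (h0 a) (hL s)) (ih q hqd hq0 _)

open CompactlySupported in
lemma aux_ext (L : ℝ[X] →ₗ[ℝ] ℝ) (hL : ∀ p, 0 ≤ L (p * p)) :
    ∃ g : (ℝ[X] × C_c(ℝ, ℝ)) →ₗ[ℝ] ℝ, (∀ p, g (p, 0) = L p) ∧
      ∀ p f, (∀ x, 0 ≤ p.eval x + f x) → 0 ≤ g (p, f) := by
  let s : PointedCone ℝ (ℝ[X] × C_c(ℝ, ℝ)) :=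
    { carrier := {z | ∀ x, 0 ≤ z.1.eval x + z.2 x}
      add_mem' := by
        intro a b ha hb x
        have h1 := ha x
        have h2 := hb x
        simp only [Prod.fst_add, Prod.snd_add, eval_add, CompactlySupportedContinuousMap.coe_add, Pi.add_apply]
        linarith
      zero_mem' := by intro x; simp
      smul_mem' := by
        rintro ⟨c, hc⟩ a ha x
        have := mul_nonneg hc (ha x)
        simpa [mul_add] using this }
  let f : (ℝ[X] × C_c(ℝ, ℝ)) →ₗ.[ℝ] ℝ :=
    { domain := LinearMap.ker (LinearMap.snd ℝ ℝ[X] C_c(ℝ, ℝ))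
      toFun := L ∘ₗ (LinearMap.fst ℝ ℝ[X] C_c(ℝ, ℝ)) ∘ₗ Submodule.subtype _ }
  have hn : ∀ x : f.domain, (x : ℝ[X] × C_c(ℝ, ℝ)) ∈ s → 0 ≤ f x := by
    rintro ⟨⟨p, h⟩, hz⟩ hx
    have hh : h = 0 := by simpa [f] using hz
    subst hh
    have := aux_nonneg L hL p.natDegree p le_rfl (fun x => by simpa using hx x) 1
    rw [one_mul, one_mul] at this
    exact this
  have hd : ∀ y, ∃ x : f.domain, (x : ℝ[X] × C_c(ℝ, ℝ)) + y ∈ s := by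
    rintro ⟨p, h⟩
    obtain ⟨M, hM⟩ : ∃ M, ∀ x, ‖h x‖ ≤ M :=
      h.hasCompactSupport.exists_bound_of_continuous h.continuous
    refine ⟨⟨(C M - p, 0), by simp [f]⟩, fun x => ?_⟩
    have := neg_le_of_abs_le (hM x)
    simp
    linarith
  obtain ⟨g, hg1, hg2⟩ := riesz_extension s f hn hd
  exact ⟨g, fun p => hg1 ⟨(p, 0), by simp [f]⟩, fun p f h => hg2 _ h⟩

def aux_chi (R : ℕ) (x : ℝ) : ℝ := max 0 (min 1 ((R : ℝ) + 2 - |x|))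

lemma aux_chi_cont (R : ℕ) : Continuous (aux_chi R) := by unfold aux_chi; fun_prop

lemma aux_chi_nonneg (R : ℕ) (x : ℝ) : 0 ≤ aux_chi R x := le_max_left _ _

lemma aux_chi_le (R : ℕ) (x : ℝ) : aux_chi R x ≤ 1 := max_le zero_le_one (min_le_left _ _)

lemma aux_chi_one (R : ℕ) (x : ℝ) (h : |x| ≤ R + 1) : aux_chi R x = 1 := by
  unfold aux_chi
  rw [min_eq_left (by linarith), max_eq_right zero_le_one]

lemma aux_chi_cs (p : ℝ[X]) (R : ℕ) : HasCompactSupport (fun x => p.eval x * aux_chi R x) := by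
  apply HasCompactSupport.intro (K := Set.Icc (-((R : ℝ) + 2)) (R + 2)) isCompact_Icc
  intro x hx
  have : (R : ℝ) + 2 < |x| := by
    by_contra hc
    exact hx (abs_le.1 (not_lt.1 hc))
  unfold aux_chi
  rw [max_eq_left ((min_le_right _ _).trans (by linarith)), mul_zero]

open CompactlySupported

def aux_pc (p : ℝ[X]) (R : ℕ) : C_c(ℝ, ℝ) :=
  ⟨⟨fun x => p.eval x * aux_chi R x, p.continuous.mul (aux_chi_cont R)⟩, aux_chi_cs p R⟩

lemma aux_pc_apply (p : ℝ[X]) (R : ℕ) (x : ℝ) : aux_pc p R x = p.eval x * aux_chi R x := rfl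

lemma aux_hamb (L : ℝ[X] →ₗ[ℝ] ℝ) (hL : ∀ p, 0 ≤ L (p * p)) :
    ∃ τ : Measure ℝ, HasAllMoments τ ∧ ∀ n : ℕ, ∫ x, x ^ n ∂τ = L (X ^ n) := by
  obtain ⟨g, hg1, hg2⟩ := aux_ext L hL
  let Λ : C_c(ℝ, ℝ) →ₚ[ℝ] ℝ := PositiveLinearMap.mk₀ (g ∘ₗ LinearMap.inr ℝ ℝ[X] C_c(ℝ, ℝ))
    (fun f hf => hg2 0 f fun x => by simpa using hf x)
  have hΛ : ∀ f, Λ f = g (0, f) := fun f => rfl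
  set τ := RealRMK.rieszMeasure Λ with hτ
  have hint : ∀ f : C_c(ℝ, ℝ), ∫ x, f x ∂τ = g (0, f) := fun f => by
    rw [hτ, RealRMK.integral_rieszMeasure, hΛ]
  have hspl : ∀ p f, g (p, f) = L p + g (0, f) := by
    intro p f
    rw [← hg1, ← map_add]; simp
  have hbd : ∀ n : ℕ, Integrable (fun x => (1 + X ^ (2 * n) : ℝ[X]).eval x) τ := by
    intro n
    set q := (1 + X ^ (2 * n) : ℝ[X]) with hq
    have hq0 : ∀ x, 0 ≤ q.eval x := fun x => by simp [hq, pow_mul]; positivity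
    have hcov : AECover τ atTop (fun R : ℕ => Set.Icc (-((R : ℝ))) (R : ℝ)) :=
      aecover_Icc (tendsto_neg_atTop_atBot.comp tendsto_natCast_atTop_atTop)
        tendsto_natCast_atTop_atTop
    refine hcov.integrable_of_integral_norm_bounded (L q)
      (fun R => q.continuous.continuousOn.integrableOn_compact isCompact_Icc)
      (Eventually.of_forall fun R => ?_)
    have hci : Integrable (fun x => aux_pc q R x) τ :=
      (aux_pc q R).continuous.integrable_of_hasCompactSupport (aux_pc q R).hasCompactSupport
    have h0 : ∀ x, 0 ≤ aux_pc q R x := fun x => by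
      rw [aux_pc_apply]; exact mul_nonneg (hq0 x) (aux_chi_nonneg _ _)
    calc ∫ x in Set.Icc (-(R : ℝ)) R, ‖q.eval x‖ ∂τ
        = ∫ x in Set.Icc (-(R : ℝ)) R, aux_pc q R x ∂τ := by
          apply setIntegral_congr_fun measurableSet_Icc
          intro x hx
          have := abs_le.2 hx
          simp only [aux_pc_apply]
          rw [aux_chi_one R x (by linarith), mul_one, Real.norm_of_nonneg (hq0 x)]
      _ ≤ ∫ x, aux_pc q R x ∂τ := setIntegral_le_integral hci (ae_of_all _ h0)
      _ ≤ L q := by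
          rw [hint]
          have h1 := hg2 q (-aux_pc q R) (fun x => by
            have := mul_le_of_le_one_right (hq0 x) (aux_chi_le R x)
            simp only [CompactlySupportedContinuousMap.coe_neg, Pi.neg_apply, aux_pc_apply]
            linarith)
          rw [hspl] at h1
          have h2 : g (0, -aux_pc q R) = - g (0, aux_pc q R) := by
            rw [← map_neg]; simp
          linarith
  have habs : ∀ (n : ℕ) (x : ℝ), |x| ^ n ≤ 1 + x ^ (2 * n) := by
    intro n x
    have h1 : x ^ (2 * n) = (|x| ^ n) ^ 2 := by rw [← pow_mul, mul_comm n 2, pow_mul, pow_mul, sq_abs]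
    rw [h1]
    nlinarith [sq_nonneg (|x| ^ n - 1)]
  have hmom : HasAllMoments τ := by
    intro n
    refine (hbd n).mono' (by fun_prop) (ae_of_all _ fun x => ?_)
    simpa using habs n x
  refine ⟨τ, hmom, fun n => ?_⟩
  have t1 : Tendsto (fun R : ℕ => ∫ x, aux_pc (X ^ n) R x ∂τ) atTop (nhds (∫ x, x ^ n ∂τ)) := by
    apply tendsto_integral_of_dominated_convergence (fun x => |x| ^ n)
    · intro R; exact (aux_pc (X ^ n) R).continuous.aestronglyMeasurable
    · exact hmom n
    · intro R
      refine ae_of_all _ fun x => ?_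
      rw [aux_pc_apply, norm_mul, Real.norm_of_nonneg (aux_chi_nonneg R x)]
      simpa using mul_le_of_le_one_right (abs_nonneg (x ^ n)) (aux_chi_le R x)
    · refine ae_of_all _ fun x => ?_
      apply tendsto_const_nhds.congr'
      filter_upwards [eventually_ge_atTop ⌈|x|⌉₊] with R hR
      have : |x| ≤ R := (Nat.le_ceil _).trans (by exact_mod_cast hR)
      rw [aux_pc_apply, aux_chi_one R x (by linarith)]; simp
  set B := L (1 + X ^ (2 * (n + 1))) with hB
  have t2 : Tendsto (fun R : ℕ => ∫ x, aux_pc (X ^ n) R x ∂τ) atTop (nhds (L (X ^ n))) := by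
    rw [tendsto_iff_norm_sub_tendsto_zero]
    have t3 : Tendsto (fun R : ℕ => (1 / ((R : ℝ) + 1)) * B) atTop (nhds 0) := by
      simpa using tendsto_one_div_add_atTop_nhds_zero_nat.mul_const B
    refine squeeze_zero (fun _ => norm_nonneg _) (fun R => ?_) t3
    have hpt : ∀ x : ℝ, |x ^ n * (1 - aux_chi R x)| ≤
        (1 / ((R : ℝ) + 1)) * (1 + x ^ (2 * (n + 1))) := by
      intro x
      have hp : 0 ≤ 1 + x ^ (2 * (n + 1)) := by rw [pow_mul]; positivity
      by_cases hx : |x| ≤ R + 1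
      · rw [aux_chi_one R x hx]; simp only [sub_self, mul_zero, abs_zero]; positivity
      · push Not at hx
        rw [abs_mul, abs_of_nonneg (sub_nonneg.2 (aux_chi_le R x)), abs_pow, one_div,
          inv_mul_eq_div, le_div_iff₀ (by positivity)]
        have h1 := habs (n + 1) x
        have h2 : |x| ^ n * (1 - aux_chi R x) ≤ |x| ^ n :=
          mul_le_of_le_one_right (by positivity) (by linarith [aux_chi_nonneg R x])
        calc |x| ^ n * (1 - aux_chi R x) * (R + 1) ≤ |x| ^ n * |x| :=
              mul_le_mul h2 hx.le (by positivity) (by positivity)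
          _ ≤ _ := by rw [← pow_succ]; exact h1
    have h2 : g (0, -aux_pc (X ^ n) R) = - g (0, aux_pc (X ^ n) R) := by
      rw [← map_neg]; simp
    set c : ℝ := 1 / ((R : ℝ) + 1) with hc
    have g1 := hg2 (c • (1 + X ^ (2 * (n + 1))) + X ^ n) (-aux_pc (X ^ n) R) (fun x => by
      have := (abs_le.1 (hpt x)).1
      simp only [CompactlySupportedContinuousMap.coe_neg, Pi.neg_apply, aux_pc_apply, eval_add,
        eval_smul, eval_one, eval_pow, eval_X, smul_eq_mul]
      linarith)
    have g2 := hg2 (c • (1 + X ^ (2 * (n + 1))) - X ^ n) (aux_pc (X ^ n) R) (fun x => by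
      have := (abs_le.1 (hpt x)).2
      simp only [aux_pc_apply, eval_add, eval_sub,
        eval_smul, eval_one, eval_pow, eval_X, smul_eq_mul]
      linarith)
    rw [hspl, h2, map_add, map_smul, ← hB, smul_eq_mul] at g1
    rw [hspl, map_sub, map_smul, ← hB, smul_eq_mul] at g2
    rw [hint, Real.norm_eq_abs, abs_le]
    constructor <;> linarith
  exact tendsto_nhds_unique t1 t2

lemma aux_lt (k : ℕ) (μ : Measure ℝ) : ∀ᵐ x ∂μ, ENNReal.ofReal (x ^ (2 * k)) < ⊤ :=
  ae_of_all _ fun _ => ENNReal.ofReal_lt_top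

lemma aux_wd_int (k : ℕ) (μ : Measure ℝ) (f : ℝ → ℝ) :
    ∫ x, f x ∂(μ.withDensity fun x => ENNReal.ofReal (x ^ (2 * k))) = ∫ x, x ^ (2 * k) * f x ∂μ := by
  rw [integral_withDensity_eq_integral_toReal_smul (by fun_prop) (aux_lt k μ)]
  congr 1; ext x
  rw [ENNReal.toReal_ofReal (by rw [pow_mul]; positivity), smul_eq_mul]

lemma aux_wd_mom (k : ℕ) {μ : Measure ℝ} (h : HasAllMoments μ) :
    HasAllMoments (μ.withDensity fun x => ENNReal.ofReal (x ^ (2 * k))) := by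
  intro n
  rw [integrable_withDensity_iff_integrable_smul' (by fun_prop) (aux_lt k μ)]
  refine (h (2 * k + n)).congr (ae_of_all _ fun x => ?_)
  have : |x| ^ (2 * k) = x ^ (2 * k) := by rw [pow_mul, pow_mul, sq_abs]
  simp only
  rw [ENNReal.toReal_ofReal (by rw [pow_mul]; positivity), smul_eq_mul, pow_add, this]

lemma aux_pd {μ : Measure ℝ} (hmom : HasAllMoments μ) (h0 : (0 : ℝ) ∈ mSupp μ)
    (hmass : μ {0} = 0) (p : ℝ[X]) (hp : p ≠ 0) : 0 < ∫ x, (p * p).eval x ∂μ := by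
  have hnn : 0 ≤ fun x => (p * p).eval x := fun x => by
    simp only [eval_mul, Pi.zero_apply]; exact mul_self_nonneg _
  refine lt_of_le_of_ne (integral_nonneg hnn) fun hc => ?_
  have h1 := (integral_eq_zero_iff_of_nonneg hnn (aux_int hmom _)).1 hc.symm
  have hfin : (p.rootSet ℝ \ {0}).Finite := (p.rootSet_finite ℝ).subset Set.diff_subset
  have hU : (p.rootSet ℝ \ {0})ᶜ ∈ nhds (0 : ℝ) := hfin.isClosed.isOpen_compl.mem_nhds (by simp)
  apply h0 _ hU
  have h2 : μ {x | ¬ ((p * p).eval x = 0)} = 0 := h1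
  refine measure_mono_null ?_ (measure_union_null h2 hmass)
  intro x hx
  by_cases hx0 : x = 0
  · right; exact hx0
  · left
    intro hz
    apply hx
    refine ⟨?_, hx0⟩
    rw [mem_rootSet]
    refine ⟨hp, ?_⟩
    simpa using hz

lemma aux_step {μ : Measure ℝ} (hmom : HasAllMoments μ) (hdet : IsDeterminate μ)
    (h0 : (0 : ℝ) ∈ mSupp μ) (hmass : μ {0} = 0) :
    IsDeterminate (μ.withDensity fun x => ENNReal.ofReal (x ^ (2 * 1))) := by
  intro ν hν heq
  by_contra hne
  have hσ := aux_wd_mom 1 hmom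
  have hfin := aux_fin hmom
  have hLσ : ∀ p, aux_L _ hσ p = aux_L μ hmom (X * X * p) := by
    intro p
    rw [aux_L_apply, aux_L_apply, aux_wd_int]
    congr 1; ext x; simp only [eval_mul, eval_X]; ring
  have hpd : ∀ p, p ≠ 0 → 0 < aux_L _ hσ (p * p) := by
    intro p hp
    rw [hLσ, aux_L_apply, show X * X * (p * p) = (X * p) * (X * p) by ring]
    exact aux_pd hmom h0 hmass _ (mul_ne_zero X_ne_zero hp)
  obtain ⟨K, hK0, hK⟩ := aux_evalbd hσ hν heq hne
  obtain ⟨M, hM0, hM⟩ := aux_local hσ hpd K hK0 hK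
  set L := aux_L μ hmom with hL
  have hLpos : ∀ p, 0 ≤ L (p * p) := fun p => by
    rw [hL, aux_L_apply]
    exact integral_nonneg fun x => by simp only [eval_mul, Pi.zero_apply]; exact mul_self_nonneg _
  have hL1 : 0 ≤ L 1 := by simpa using hLpos 1
  set B := M * (2 * (L 1 + 1)) with hB
  have hB0 : 0 ≤ B := by positivity
  set δ : ℝ := 1 / (2 * (B + 1)) with hδ
  have hδ0 : 0 < δ := by positivity
  have hδ1 : δ ≤ 1 := by rw [hδ, div_le_one (by positivity)]; linarith
  set c1 : ℝ := 1 / 4 * μ.real (Set.Ioo (-δ) δ) with hc1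
  have hc1pos : 0 < c1 := by
    have : μ (Set.Ioo (-δ) δ) ≠ 0 := h0 _ (Ioo_mem_nhds (by linarith) hδ0)
    have : 0 < μ.real (Set.Ioo (-δ) δ) := ENNReal.toReal_pos this (measure_ne_top _ _)
    positivity
  set c := min 1 c1 with hc
  have hcpos : 0 < c := lt_min one_pos hc1pos
  have hmain : ∀ r : ℝ[X], r.eval 0 = 1 → c ≤ L (r * r) := by
    intro r hr
    by_cases hr1 : 1 ≤ L (r * r)
    · exact (min_le_left _ _).trans hr1
    push Not at hr1
    refine (min_le_right _ _).trans ?_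
    obtain ⟨p, hp⟩ : X ∣ 1 - r := by
      rw [X_dvd_iff, coeff_zero_eq_eval_zero]; simp [hr]
    have e1 : aux_L _ hσ (p * p) ≤ 2 * (L 1 + 1) := by
      rw [hLσ, show X * X * (p * p) = (X * p) * (X * p) by ring, ← hp]
      have h2 := hLpos (1 + r)
      have e2 : (1 - r) * (1 - r) = (2 : ℝ) • (1 : ℝ[X]) + (2 : ℝ) • (r * r) - (1 + r) * (1 + r) := by
        simp only [smul_eq_C_mul, map_ofNat]; ring
      rw [e2, map_sub, map_add, map_smul, map_smul, smul_eq_mul, smul_eq_mul]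
      linarith
    have hrx : ∀ x ∈ Set.Ioo (-δ) δ, 1 / 4 ≤ (r * r).eval x := by
      intro x hx
      have hxδ : |x| < δ := abs_lt.2 hx
      have h1 := (hM p x (by linarith)).trans (mul_le_mul_of_nonneg_left e1 hM0)
      have h2 : |p.eval x| ≤ B + 1 := by
        rw [← hB, ← sq_abs] at h1
        nlinarith [sq_nonneg (|p.eval x| - 1)]
      have h3 : |x * p.eval x| ≤ 1 / 2 := by
        rw [abs_mul]
        calc |x| * |p.eval x| ≤ δ * (B + 1) := mul_le_mul hxδ.le h2 (abs_nonneg _) hδ0.le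
          _ = 1 / 2 := by rw [hδ]; field_simp
      have h4 : r.eval x = 1 - x * p.eval x := by
        have := congrArg (eval x) hp
        simp only [eval_sub, eval_one, eval_mul, eval_X] at this
        linarith
      have h5 := (abs_le.1 h3).2
      rw [eval_mul, h4]
      nlinarith
    calc c1 = ∫ x in Set.Ioo (-δ) δ, (1 / 4 : ℝ) ∂μ := by
          rw [setIntegral_const, smul_eq_mul, hc1, mul_comm]
      _ ≤ ∫ x in Set.Ioo (-δ) δ, (r * r).eval x ∂μ := by
          apply setIntegral_mono_on (integrable_const _).integrableOn (aux_int hmom _).integrableOn measurableSet_Ioo hrx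
      _ ≤ L (r * r) := by
          rw [hL, aux_L_apply]
          exact setIntegral_le_integral (aux_int hmom _)
            (ae_of_all _ fun x => by simp only [eval_mul, Pi.zero_apply]; exact mul_self_nonneg _)
  have hmain2 : ∀ r : ℝ[X], c * r.eval 0 ^ 2 ≤ L (r * r) := by
    intro r
    by_cases hr : r.eval 0 = 0
    · rw [hr]; simpa using hLpos r
    have h1 := hmain ((r.eval 0)⁻¹ • r) (by simp [hr])
    rw [smul_mul_smul_comm, map_smul, smul_eq_mul] at h1
    have h2 : 0 < r.eval 0 ^ 2 := by positivity
    have h3 := mul_le_mul_of_nonneg_right h1 h2.le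
    refine h3.trans (le_of_eq ?_)
    field_simp
  let L' : ℝ[X] →ₗ[ℝ] ℝ := L - c • Polynomial.leval 0
  have hL' : ∀ p, L' p = L p - c * p.eval 0 := fun p => rfl
  obtain ⟨τ, hτ, hτm⟩ := aux_hamb L' (fun p => by
    rw [hL', eval_mul, ← sq]; rw [sq p]; linarith [hmain2 p])
  have hdi : ∀ f : ℝ → ℝ, Integrable f (ENNReal.ofReal c • Measure.dirac (0 : ℝ)) := fun f =>
    (integrable_dirac (by simp)).smul_measure ENNReal.ofReal_ne_top
  have hfinal : τ + ENNReal.ofReal c • Measure.dirac 0 = μ := by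
    apply hdet
    · intro n
      exact (hτ n).add_measure (hdi _)
    · intro n
      have hi : Integrable (fun x : ℝ => x ^ n) τ := by simpa using aux_int hτ (X ^ n)
      rw [integral_add_measure hi (hdi _), integral_smul_measure, integral_dirac, hτm, hL', hL,
        aux_L_apply, ENNReal.toReal_ofReal hcpos.le]
      simp
  have : ENNReal.ofReal c ≤ μ {0} := by
    rw [← hfinal]; simp
  rw [hmass] at this
  simp at this
  linarith

theorem stmt7 (μ : Measure ℝ) (hmom : HasAllMoments μ) (hinf : (mSupp μ).Infinite)
    (hdet : IsDeterminate μ) (hsupp : mSupp μ ⊆ Set.Ici (0 : ℝ))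
    (h0 : (0 : ℝ) ∈ mSupp μ) (hmass : μ {0} = 0) :
    ∀ k : ℕ, IsDeterminate (μ.withDensity fun x => ENNReal.ofReal (x ^ (2 * k))) := by
  have hsuppk : ∀ k : ℕ, (0 : ℝ) ∈ mSupp (μ.withDensity fun x => ENNReal.ofReal (x ^ (2 * k))) := by
    intro k U hU hz
    apply h0 U hU
    have hz' := (withDensity_apply_eq_zero' (μ := μ)
      (f := fun x : ℝ => ENNReal.ofReal (x ^ (2 * k))) (s := U) (by fun_prop)).1 hz
    refine measure_mono_null ?_ (measure_union_null hz' hmass)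
    intro x hx
    by_cases hx0 : x = 0
    · right; exact hx0
    · left
      refine ⟨?_, hx⟩
      simp only [Set.mem_setOf_eq, ne_eq, ENNReal.ofReal_eq_zero, not_le]
      rw [pow_mul]; positivity
  have hmassk : ∀ k : ℕ, (μ.withDensity fun x => ENNReal.ofReal (x ^ (2 * k))) {0} = 0 :=
    fun k => withDensity_absolutelyContinuous _ _ hmass
  intro k
  induction k with
  | zero => simpa using hdet
  | succ k ih =>
    have h1 := aux_step (aux_wd_mom k hmom) ih (hsuppk k) (hmassk k)
    rw [← withDensity_mul _ (by fun_prop) (by fun_prop)] at h1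
    convert h1 using 2
    ext x
    simp only [Pi.mul_apply]
    rw [← ENNReal.ofReal_mul (by rw [pow_mul]; positivity), ← pow_add, mul_add]
end
end

section
/- Let μ be a measure on ℝ with all moments finite and infinite support, satisfying: (1) μ is determinate, (2) supp(μ) ⊆ [0,∞), (3) 0 ∈ supp(μ), (4) μ({0}) = 0. Fix n ∈ ℕ₀ and consider the Hilbert space H = L²(μ) ⊕ ℂ^{n+1} with inner product ⟨(f,β),(g,γ)⟩ = ∫ f(x) conj(g(x)) dμ(x) + Σ_{j=0}^n β_j conj(γ_j). Then the set of vectors {(p, (p(0), p'(0), …, p^{(n)}(0))) : p a complex polynomial} is dense in H, where p^{(j)} denotes the j-th derivative of p. -/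
open MeasureTheory Polynomial Filter

noncomputable section

theorem aux_prod_le (z : ℂ) (hz : ‖z‖ ≤ 1) (s : Multiset ℂ)
    (hs : ∀ w ∈ s, ∃ t : ℝ, 0 ≤ t ∧ w = t) :
    ‖((s.map (fun w => X - C w)).prod).eval z‖ ≤ ‖((s.map (fun w => X - C w)).prod).eval (-1)‖ := by
  induction s using Multiset.induction_on with
  | empty => simp
  | cons a s ih =>
    have ih' := ih (fun w hw => hs w (Multiset.mem_cons_of_mem hw))
    obtain ⟨t, ht, rfl⟩ := hs a (Multiset.mem_cons_self a s)
    simp only [Multiset.map_cons, Multiset.prod_cons, eval_mul, norm_mul, eval_sub, eval_X, eval_C]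
    have h1 : ‖z - (t : ℂ)‖ ≤ ‖(-1 : ℂ) - t‖ := by
      have e : ‖(-1 : ℂ) - t‖ = 1 + t := by
        rw [show (-1 : ℂ) - t = ((-(1 + t) : ℝ) : ℂ) by push_cast; ring, Complex.norm_real,
          Real.norm_eq_abs, abs_neg, abs_of_nonneg (by linarith)]
      rw [e]
      calc ‖z - (t : ℂ)‖ ≤ ‖z‖ + ‖(t : ℂ)‖ := norm_sub_le _ _
        _ ≤ 1 + t := by
          rw [Complex.norm_real, Real.norm_eq_abs, abs_of_nonneg ht]; linarith
    gcongr

theorem aux_opoly {E : Type*} [NormedAddCommGroup E] [InnerProductSpace ℂ E]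
    (Φ : ℂ[X] →ₗ[ℂ] E) (N : ℕ) :
    ∃ P : ℂ[X], P.Monic ∧ P.natDegree = N ∧
      ∀ q : ℂ[X], q.degree < N → inner ℂ (Φ q) (Φ P) = 0 := by
  let W : Submodule ℂ E := (degreeLT ℂ N).map Φ
  have : FiniteDimensional ℂ (degreeLT ℂ N) :=
    Module.Finite.equiv (degreeLTEquiv ℂ N).symm
  have : FiniteDimensional ℂ W := inferInstanceAs (FiniteDimensional ℂ ((degreeLT ℂ N).map Φ))
  obtain ⟨r, hr, hre⟩ : W.starProjection (Φ (X ^ N)) ∈ W := by simp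
  have hr' : r.degree < N := mem_degreeLT.1 hr
  refine ⟨X ^ N - r, monic_X_pow_sub hr', ?_, ?_⟩
  · apply natDegree_eq_of_degree_eq_some
    rw [degree_sub_eq_left_of_degree_lt (by rwa [degree_X_pow]), degree_X_pow]
  · intro q hq
    rw [map_sub, hre]
    exact Submodule.sub_starProjection_mem_orthogonal _ _ ⟨q, mem_degreeLT.2 hq, rfl⟩

theorem aux_dom {E : Type*} [NormedAddCommGroup E] [InnerProductSpace ℂ E]
    (Φ : ℂ[X] →ₗ[ℂ] E) (hinj : Function.Injective Φ)
    (hpos : ∀ s, ∃ t : ℝ, 0 ≤ t ∧ inner ℂ (Φ s) (Φ (X * s)) = t) (N : ℕ) :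
    ∀ p : ℂ[X], p.degree < N → ∃ r : ℂ[X], r.degree < N ∧ ‖Φ r‖ ≤ ‖Φ p‖ ∧
      ∃ v : ℝ, r.eval (-1) = v ∧ ∀ z : ℂ, ‖z‖ ≤ 1 → ‖p.eval z‖ ≤ v := by
  induction N with
  | zero =>
    intro p hp
    have : p = 0 := by
      rw [← degree_eq_bot]; simpa using hp
    subst this
    exact ⟨0, by simp, le_rfl, 0, by simp, by simp⟩
  | succ N ih =>
    intro p hp
    obtain ⟨P, hPm, hPd, hPo⟩ := aux_opoly Φ N
    have hPdeg : P.degree = N := by rw [degree_eq_natDegree hPm.ne_zero, hPd]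
    have hroot : ∀ w ∈ P.roots, ∃ t : ℝ, 0 ≤ t ∧ w = t := by
      intro w hw
      have hw' := isRoot_of_mem_roots hw
      obtain ⟨s, hs⟩ := dvd_iff_isRoot.2 hw'
      have hs0 : s ≠ 0 := by rintro rfl; simp at hs; exact hPm.ne_zero hs
      have hsd : s.degree < N := by
        rw [← hPdeg, hs, degree_mul, degree_X_sub_C, degree_eq_natDegree hs0]
        norm_cast; omega
      have h1 := hPo s hsd
      obtain ⟨t, ht, hte⟩ := hpos s
      rw [hs, sub_mul, map_sub, inner_sub_right, hte, ← smul_eq_C_mul, map_smul, inner_smul_right,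
        inner_self_eq_norm_sq_to_K] at h1
      have hn : 0 < ‖Φ s‖ := norm_pos_iff.2 (fun h => hs0 (hinj (by simpa using h)))
      have hn' : ((‖Φ s‖ : ℝ) : ℂ) ≠ 0 := by exact_mod_cast hn.ne'
      refine ⟨t / ‖Φ s‖ ^ 2, by positivity, ?_⟩
      push_cast
      rw [eq_div_iff (pow_ne_zero 2 hn')]
      simpa using (sub_eq_zero.1 h1).symm
    have hPle : ∀ z : ℂ, ‖z‖ ≤ 1 → ‖P.eval z‖ ≤ ‖P.eval (-1)‖ := by
      intro z hz
      have := aux_prod_le z hz P.roots hroot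
      have e : P = (P.roots.map (fun w => X - C w)).prod :=
        (IsAlgClosed.splits P).eq_prod_roots_of_monic hPm
      rwa [← e] at this
    set c := p.coeff N
    have hq : (p - C c * P).degree < N := by
      rw [degree_lt_iff_coeff_zero]
      intro m hm
      rcases hm.eq_or_lt with rfl | hm
      · have : P.coeff N = 1 := by rw [← hPd]; exact hPm
        simp [this, c]
      · have h1 : p.coeff m = 0 := (degree_lt_iff_coeff_zero _ _).1 hp m hm
        have h2 : P.coeff m = 0 := coeff_eq_zero_of_natDegree_lt (by omega)
        simp [h1, h2]
    obtain ⟨r, hr, hrn, v, hv, hvle⟩ := ih _ hq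
    obtain ⟨d, hd, hdv⟩ : ∃ d : ℂ, ‖d‖ = ‖c‖ ∧ d * P.eval (-1) = ((‖c‖ * ‖P.eval (-1)‖ : ℝ) : ℂ) := by
      by_cases h : P.eval (-1) = 0
      · exact ⟨c, rfl, by simp [h]⟩
      · refine ⟨‖c‖ * ‖P.eval (-1)‖ / P.eval (-1), ?_, ?_⟩
        · have : ‖P.eval (-1)‖ ≠ 0 := by simpa using h
          simp; field_simp
        · field_simp; push_cast; ring
    refine ⟨r + C d * P, ?_, ?_, v + ‖c‖ * ‖P.eval (-1)‖, ?_, ?_⟩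
    · refine (degree_add_le _ _).trans_lt (max_lt (hr.trans (by norm_cast; omega)) ?_)
      rw [← smul_eq_C_mul]
      refine (degree_smul_le _ _).trans_lt ?_
      rw [hPdeg]; norm_cast; omega
    · have key : ∀ (u : ℂ[X]) (a : ℂ), u.degree < N →
          ‖Φ (u + C a * P)‖ ^ 2 = ‖Φ u‖ ^ 2 + ‖a‖ ^ 2 * ‖Φ P‖ ^ 2 := by
        intro u a hu
        have h0 : inner ℂ (Φ u) (Φ (C a * P)) = 0 := by
          rw [← smul_eq_C_mul, map_smul, inner_smul_right, hPo u hu, mul_zero]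
        have := norm_add_sq_eq_norm_sq_add_norm_sq_of_inner_eq_zero (𝕜 := ℂ) _ _ h0
        rw [map_add, pow_two, this, ← smul_eq_C_mul, map_smul, norm_smul]
        ring
      have e1 := key r d hr
      have e2 := key _ c hq
      rw [sub_add_cancel] at e2
      have : ‖Φ r‖ ^ 2 ≤ ‖Φ (p - C c * P)‖ ^ 2 := by gcongr
      refine le_of_sq_le_sq ?_ (norm_nonneg _)
      rw [e1, e2, hd]; linarith
    · simp [hv, hdv]
    · intro z hz
      have h1 := hvle z hz
      have h2 := hPle z hz
      calc ‖p.eval z‖ = ‖(p - C c * P).eval z + c * P.eval z‖ := by simp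
        _ ≤ _ := (norm_add_le _ _).trans (by rw [norm_mul]; gcongr)

/-- bounded evaluation on the unit disc -/
theorem aux_disc {E : Type*} [NormedAddCommGroup E] [InnerProductSpace ℂ E]
    (Φ : ℂ[X] →ₗ[ℂ] E) (hinj : Function.Injective Φ)
    (hpos : ∀ s, ∃ t : ℝ, 0 ≤ t ∧ inner ℂ (Φ s) (Φ (X * s)) = t) (K : ℝ) (hK : 0 ≤ K)
    (hB : ∀ p : ℂ[X], ‖p.eval (-1)‖ ≤ K * ‖Φ p‖) (p : ℂ[X]) (z : ℂ) (hz : ‖z‖ ≤ 1) :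
    ‖p.eval z‖ ≤ K * ‖Φ p‖ := by
  obtain ⟨r, -, hr, v, hv, hvle⟩ := aux_dom Φ hinj hpos (p.natDegree + 1) p
    (degree_le_natDegree.trans_lt (by norm_cast; omega))
  calc ‖p.eval z‖ ≤ v := hvle z hz
    _ ≤ ‖r.eval (-1)‖ := by rw [hv, Complex.norm_real]; exact le_abs_self v
    _ ≤ K * ‖Φ r‖ := hB r
    _ ≤ _ := by gcongr

theorem aux_step_s8 {E : Type*} [NormedAddCommGroup E] [InnerProductSpace ℂ E]
    (Φ : ℂ[X] →ₗ[ℂ] E) (hinj : Function.Injective Φ)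
    (hpos : ∀ s, ∃ t : ℝ, 0 ≤ t ∧ inner ℂ (Φ (X * s)) (Φ (X * (X * s))) = t)
    (hS : ∀ δ : ℝ, 0 < δ → ∃ c : ℝ, 0 < c ∧ ∀ p : ℂ[X],
      (∀ x : ℝ, 0 ≤ x → x ≤ δ → 1 / 2 ≤ ‖p.eval (x : ℂ)‖) → c ≤ ‖Φ p‖)
    (K : ℝ) (hK : 0 ≤ K) (hB : ∀ p : ℂ[X], ‖p.eval (-1)‖ ≤ K * ‖Φ (X * p)‖) :
    ∃ K' : ℝ, 0 ≤ K' ∧ ∀ p : ℂ[X], ‖p.eval (-1)‖ ≤ K' * ‖Φ p‖ := by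
  have hdisc := aux_disc (Φ ∘ₗ LinearMap.mulLeft ℂ X) (by
    intro a b hab
    have := hinj hab
    simpa using this) (by simpa using hpos) K hK (by simpa using hB)
  simp only [LinearMap.coe_comp, Function.comp_apply, LinearMap.mulLeft_apply] at hdisc
  set M := ‖Φ 1‖ + 1 with hM
  have hM0 : 0 < M := by positivity
  set δ := min 1 (1 / (2 * K * M + 1)) with hδ
  have hδ0 : 0 < δ := by positivity
  obtain ⟨c, hc, hcS⟩ := hS δ hδ0
  have key1 : ∀ q : ℂ[X], min 1 c ≤ ‖Φ (1 + X * q)‖ := by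
    intro q
    by_contra! h
    have h1 : ‖Φ (1 + X * q)‖ < 1 := h.trans_le (min_le_left _ _)
    have h2 : ‖Φ (1 + X * q)‖ < c := h.trans_le (min_le_right _ _)
    have h3 : ‖Φ (X * q)‖ ≤ M := by
      have : Φ (X * q) = Φ (1 + X * q) - Φ 1 := by simp
      rw [this]
      exact (norm_sub_le _ _).trans (by linarith)
    refine absurd (hcS (1 + X * q) ?_) (not_le.2 h2)
    intro x hx0 hx
    have hx1 : ‖(x : ℂ)‖ ≤ 1 := by
      rw [Complex.norm_real, Real.norm_eq_abs, abs_of_nonneg hx0]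
      exact hx.trans (min_le_left _ _)
    have h4 : ‖q.eval (x : ℂ)‖ ≤ K * M := (hdisc q x hx1).trans (by gcongr)
    have h5 : x * (K * M) ≤ 1 / 2 := by
      have : x ≤ 1 / (2 * K * M + 1) := hx.trans (min_le_right _ _)
      rw [le_div_iff₀ (by positivity)] at this
      nlinarith
    have h6 : ‖(x : ℂ) * q.eval (x : ℂ)‖ ≤ 1 / 2 := by
      rw [norm_mul, Complex.norm_real, Real.norm_eq_abs, abs_of_nonneg hx0]
      exact (by gcongr : x * ‖q.eval (x : ℂ)‖ ≤ x * (K * M)).trans h5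
    simp only [eval_add, eval_one, eval_mul, eval_X]
    have h7 := norm_sub_norm_le (1 : ℂ) (-((x : ℂ) * q.eval (x : ℂ)))
    rw [sub_neg_eq_add, norm_neg, norm_one] at h7
    linarith
  set m := min 1 c with hm
  have hm0 : 0 < m := lt_min one_pos hc
  have key2 : ∀ p : ℂ[X], ‖p.eval 0‖ ≤ m⁻¹ * ‖Φ p‖ := by
    intro p
    by_cases h : p.eval 0 = 0
    · rw [h, norm_zero]; positivity
    · have e : p = C (p.eval 0) * (1 + X * (C (p.eval 0)⁻¹ * p.divX)) := by
        conv_lhs => rw [← divX_mul_X_add p]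
        have : C (p.eval 0) * C (p.eval 0)⁻¹ = (1 : ℂ[X]) := by rw [← C_mul, mul_inv_cancel₀ h, C_1]
        rw [coeff_zero_eq_eval_zero]
        linear_combination (- X * p.divX) * this
      have h1 := key1 (C (p.eval 0)⁻¹ * p.divX)
      have h2 : ‖Φ p‖ = ‖p.eval 0‖ * ‖Φ (1 + X * (C (p.eval 0)⁻¹ * p.divX))‖ := by
        conv_lhs => rw [e, ← smul_eq_C_mul, map_smul, norm_smul]
      rw [h2, inv_mul_eq_div, le_div_iff₀ hm0]
      gcongr
  refine ⟨m⁻¹ + K * (1 + m⁻¹ * ‖Φ 1‖), by positivity, fun p => ?_⟩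
  have e : p = p.divX * X + C (p.coeff 0) := (divX_mul_X_add p).symm
  have h0 := key2 p
  have hq : ‖Φ (X * p.divX)‖ ≤ (1 + m⁻¹ * ‖Φ 1‖) * ‖Φ p‖ := by
    have : Φ (X * p.divX) = Φ p - p.eval 0 • Φ 1 := by
      rw [← map_smul, ← map_sub]
      congr 1
      rw [smul_eq_C_mul, mul_one, ← coeff_zero_eq_eval_zero]
      linear_combination -e
    rw [this]
    calc _ ≤ ‖Φ p‖ + ‖p.eval 0‖ * ‖Φ 1‖ := (norm_sub_le _ _).trans (by rw [norm_smul])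
      _ ≤ ‖Φ p‖ + m⁻¹ * ‖Φ p‖ * ‖Φ 1‖ := by gcongr
      _ = _ := by ring
  have hd := hB p.divX
  have : p.eval (-1) = p.eval 0 - p.divX.eval (-1) := by
    conv_lhs => rw [e]
    simp [coeff_zero_eq_eval_zero]; ring
  rw [this]
  calc _ ≤ ‖p.eval 0‖ + ‖p.divX.eval (-1)‖ := norm_sub_le _ _
    _ ≤ m⁻¹ * ‖Φ p‖ + K * ((1 + m⁻¹ * ‖Φ 1‖) * ‖Φ p‖) := by
      gcongr; exact hd.trans (by gcongr)
    _ = _ := by ring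

/-- nonnegative real polynomials are squared moduli -/
theorem aux_sos (N : ℕ) : ∀ p : ℝ[X], p.natDegree ≤ N → (∀ x : ℝ, 0 ≤ p.eval x) →
    ∃ g : ℂ[X], ∀ x : ℝ, p.eval x = ‖g.eval (x : ℂ)‖ ^ 2 := by
  induction N using Nat.strong_induction_on with
  | _ N ih =>
  intro p hpN hp
  by_cases hd : p.natDegree = 0
  · obtain ⟨c, rfl⟩ := natDegree_eq_zero.1 hd
    have hc : 0 ≤ c := by simpa using hp 0
    refine ⟨C ((Real.sqrt c : ℝ) : ℂ), fun x => ?_⟩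
    simp [Real.sq_sqrt hc]
  have hp0 : p ≠ 0 := by rintro rfl; simp at hd
  -- it suffices to factor out a monic quadratic
  have main : ∀ (w : ℂ) (r : ℝ[X]),
      (∀ x : ℝ, p.eval x = ‖(x : ℂ) - w‖ ^ 2 * r.eval x) → r.natDegree < p.natDegree →
      ∃ g : ℂ[X], ∀ x : ℝ, p.eval x = ‖g.eval (x : ℂ)‖ ^ 2 := by
    intro w r hr hrd
    have hr0 : ∀ x : ℝ, 0 ≤ r.eval x := by
      have hcl : IsClosed {x : ℝ | 0 ≤ r.eval x} := isClosed_le continuous_const r.continuous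
      have hden : Dense ({w.re}ᶜ : Set ℝ) := dense_compl_singleton _
      have hsub : ({w.re}ᶜ : Set ℝ) ⊆ {x : ℝ | 0 ≤ r.eval x} := by
        intro x hx
        have hne : (x : ℂ) - w ≠ 0 := by
          intro h
          apply hx
          have := congrArg Complex.re h
          simp at this
          simp; linarith
        have h1 := hp x
        rw [hr x] at h1
        exact nonneg_of_mul_nonneg_right h1 (by positivity)
      intro x
      exact (hcl.closure_subset_iff.2 hsub) (hden x)
    obtain ⟨g, hg⟩ := ih r.natDegree (by omega) r le_rfl hr0
    refine ⟨(X - C w) * g, fun x => ?_⟩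
    rw [hr x, hg x]
    simp [mul_pow]
  by_cases hroot : ∃ a : ℝ, p.IsRoot a
  · obtain ⟨a, ha⟩ := hroot
    obtain ⟨q, hq⟩ := dvd_iff_isRoot.2 ha
    have hqa : q.IsRoot a := by
      have hc : Continuous (fun x => q.eval x) := q.continuous
      apply le_antisymm
      · have : Tendsto (fun x => q.eval x) (nhdsWithin a (Set.Iio a)) (nhds (q.eval a)) :=
          hc.continuousAt.continuousWithinAt
        refine le_of_tendsto this ?_
        filter_upwards [self_mem_nhdsWithin] with x hx
        have h1 := hp x
        rw [hq] at h1
        simp only [eval_mul, eval_sub, eval_X, eval_C] at h1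
        have hx' : x - a < 0 := sub_neg.2 hx
        by_contra! h
        nlinarith
      · have : Tendsto (fun x => q.eval x) (nhdsWithin a (Set.Ioi a)) (nhds (q.eval a)) :=
          hc.continuousAt.continuousWithinAt
        refine ge_of_tendsto this ?_
        filter_upwards [self_mem_nhdsWithin] with x hx
        have h1 := hp x
        rw [hq] at h1
        simp only [eval_mul, eval_sub, eval_X, eval_C] at h1
        have hx' : 0 < x - a := sub_pos.2 hx
        by_contra! h
        nlinarith
    obtain ⟨r, hr⟩ := dvd_iff_isRoot.2 hqa
    have e : p = (X - C a) * ((X - C a) * r) := by rw [hq, hr]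
    have hr0 : r ≠ 0 := by rintro rfl; simp at e; exact hp0 e
    refine main a r (fun x => ?_) ?_
    · rw [e, ← Complex.ofReal_sub, Complex.norm_real, Real.norm_eq_abs, sq_abs]
      simp; ring
    · rw [e, natDegree_mul (X_sub_C_ne_zero a) (mul_ne_zero (X_sub_C_ne_zero a) hr0),
        natDegree_mul (X_sub_C_ne_zero a) hr0]
      simp; omega
  · push Not at hroot
    obtain ⟨w, hw⟩ := IsAlgClosed.exists_aeval_eq_zero ℂ p (fun h => hd (natDegree_eq_of_degree_eq_some h))
    have hwim : w.im ≠ 0 := by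
      intro h
      have e : w = ((w.re : ℝ) : ℂ) := by apply Complex.ext <;> simp [h]
      apply hroot w.re
      rw [e] at hw
      have : aeval ((w.re : ℝ) : ℂ) p = ((p.eval w.re : ℝ) : ℂ) := by
        simpa using aeval_algebraMap_apply ℂ w.re p
      rw [this] at hw
      exact_mod_cast hw
    obtain ⟨r, hr⟩ := p.quadratic_dvd_of_aeval_eq_zero_im_ne_zero hw hwim
    have hr0 : r ≠ 0 := by rintro rfl; simp at hr; exact hp0 hr
    refine main w r (fun x => ?_) ?_
    · rw [hr, ← Complex.normSq_eq_norm_sq, ← Complex.normSq_eq_norm_sq]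
      simp [Complex.normSq_apply]; left; ring
    · have hq : (X ^ 2 - C (2 * w.re) * X + C (‖w‖ ^ 2)).natDegree = 2 := by compute_degree!
      have hq0 : (X ^ 2 - C (2 * w.re) * X + C (‖w‖ ^ 2)) ≠ 0 := by
        intro h; rw [h] at hq; simp at hq
      rw [hr, natDegree_mul hq0 hr0, hq]; omega

def growthSub : Submodule ℝ (ℝ → ℝ) where
  carrier := {f | ∃ p : ℝ[X], ∀ x, |f x| ≤ p.eval x}
  add_mem' := by
    rintro f g ⟨p, hp⟩ ⟨q, hq⟩
    exact ⟨p + q, fun x => by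
      rw [eval_add]; exact (abs_add_le _ _).trans (add_le_add (hp x) (hq x))⟩
  zero_mem' := ⟨0, by simp⟩
  smul_mem' := by
    rintro c f ⟨p, hp⟩
    exact ⟨C |c| * p, fun x => by
      simp only [Pi.smul_apply, smul_eq_mul, abs_mul, eval_mul, eval_C]
      gcongr; exact hp x⟩

theorem poly_growth (p : ℝ[X]) : (fun x => p.eval x) ∈ growthSub :=
  ⟨1 + p ^ 2, fun x => by
    simp only [eval_add, eval_one, eval_pow]
    rw [abs_le]; constructor <;> nlinarith [sq_nonneg (p.eval x - 1), sq_nonneg (p.eval x + 1)]⟩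

theorem cc_growth (f : CompactlySupportedContinuousMap ℝ ℝ) : (fun x => f x) ∈ growthSub := by
  obtain ⟨B, hB⟩ := f.hasCompactSupport.exists_bound_of_continuous f.continuous
  exact ⟨C B, fun x => by simpa using hB x⟩

def polyLin : ℝ[X] →ₗ[ℝ] growthSub where
  toFun p := ⟨fun x => p.eval x, poly_growth p⟩
  map_add' p q := by ext x; simp
  map_smul' c p := by ext x; simp

theorem polyLin_inj : Function.Injective polyLin := by
  intro p q h
  apply Polynomial.funext
  intro x
  exact congrFun (congrArg Subtype.val h) x

def ccLin : CompactlySupportedContinuousMap ℝ ℝ →ₗ[ℝ] growthSub where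
  toFun f := ⟨fun x => f x, cc_growth f⟩
  map_add' p q := by ext x; simp
  map_smul' c p := by ext x; simp

def posCone : PointedCone ℝ growthSub where
  carrier := {f | ∀ x, 0 ≤ f.1 x}
  add_mem' := fun {f g} hf hg x => add_nonneg (hf x) (hg x)
  zero_mem' := fun x => le_rfl
  smul_mem' := fun c f hf x => mul_nonneg c.2 (hf x)

def cutoff (N : ℕ) (x : ℝ) : ℝ := max 0 (min 1 (N + 1 - |x|))

theorem cutoff_cont (N : ℕ) : Continuous (cutoff N) := by unfold cutoff; fun_prop
theorem cutoff_nonneg (N : ℕ) (x : ℝ) : 0 ≤ cutoff N x := le_max_left _ _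
theorem cutoff_le (N : ℕ) (x : ℝ) : cutoff N x ≤ 1 := max_le zero_le_one (min_le_left _ _)
theorem cutoff_one (N : ℕ) (x : ℝ) (h : |x| ≤ N) : cutoff N x = 1 := by
  unfold cutoff
  rw [min_eq_left (by linarith), max_eq_right zero_le_one]
theorem cutoff_supp (N : ℕ) : HasCompactSupport (cutoff N) := by
  apply HasCompactSupport.of_support_subset_isCompact (isCompact_Icc (a := -((N : ℝ) + 1)) (b := N + 1))
  intro x hx
  rw [Function.mem_support] at hx
  rw [Set.mem_Icc, ← abs_le]
  by_contra! h
  apply hx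
  unfold cutoff
  rw [max_eq_left]
  exact (min_le_right _ _).trans (by linarith)

def cutPoly (N : ℕ) (p : ℝ[X]) : CompactlySupportedContinuousMap ℝ ℝ where
  toFun x := cutoff N x * p.eval x
  continuous_toFun := (cutoff_cont N).mul p.continuous
  hasCompactSupport' := (cutoff_supp N).mul_right

theorem cutPoly_apply (N : ℕ) (p : ℝ[X]) (x : ℝ) : cutPoly N p x = cutoff N x * p.eval x := rfl

theorem hamburger (L : ℝ[X] →ₗ[ℝ] ℝ) (hL : ∀ p : ℝ[X], (∀ x, 0 ≤ p.eval x) → 0 ≤ L p) :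
    ∃ σ : Measure ℝ, HasAllMoments σ ∧ ∀ p : ℝ[X], ∫ x, p.eval x ∂σ = L p := by
  let f : growthSub →ₗ.[ℝ] ℝ :=
    ⟨LinearMap.range polyLin, L ∘ₗ (LinearEquiv.ofInjective polyLin polyLin_inj).symm.toLinearMap⟩
  have hf : ∀ p : ℝ[X], f ⟨polyLin p, ⟨p, rfl⟩⟩ = L p := by
    intro p
    have : (LinearEquiv.ofInjective polyLin polyLin_inj).symm ⟨polyLin p, ⟨p, rfl⟩⟩ = p := by
      rw [LinearEquiv.symm_apply_eq]; rfl
    change L ((LinearEquiv.ofInjective polyLin polyLin_inj).symm ⟨polyLin p, ⟨p, rfl⟩⟩) = L p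
    rw [this]
  obtain ⟨g, hgf, hgpos⟩ := riesz_extension posCone f (by
    rintro ⟨_, p, rfl⟩ hx
    rw [hf p]
    exact hL p hx) (by
    rintro ⟨y, p, hp⟩
    refine ⟨⟨polyLin p, ⟨p, rfl⟩⟩, fun x => ?_⟩
    have := (abs_le.1 (hp x)).1
    change 0 ≤ p.eval x + y x
    linarith)
  have hg : ∀ p, g (polyLin p) = L p := fun p => (hgf ⟨polyLin p, ⟨p, rfl⟩⟩).trans (hf p)
  have gmono : ∀ a b : growthSub, (∀ x, a.1 x ≤ b.1 x) → g a ≤ g b := by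
    intro a b h
    have := hgpos (b - a) (fun x => sub_nonneg.2 (h x))
    rw [map_sub] at this; linarith
  let Λ : CompactlySupportedContinuousMap ℝ ℝ →ₚ[ℝ] ℝ :=
    PositiveLinearMap.mk₀ (g ∘ₗ ccLin) (fun φ hφ => hgpos _ (fun x => hφ x))
  let σ := RealRMK.rieszMeasure Λ
  have hσ : ∀ φ : CompactlySupportedContinuousMap ℝ ℝ, ∫ x, φ x ∂σ = g (ccLin φ) :=
    fun φ => RealRMK.integral_rieszMeasure Λ φ
  have hint : ∀ φ : CompactlySupportedContinuousMap ℝ ℝ, Integrable (fun x => φ x) σ :=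
    fun φ => φ.continuous.integrable_of_hasCompactSupport φ.hasCompactSupport
  have hmom : HasAllMoments σ := by
    intro n
    have hcov : AECover σ atTop (fun N : ℕ => Set.Icc (-(N : ℝ)) N) :=
      aecover_Icc (tendsto_neg_atTop_atBot.comp tendsto_natCast_atTop_atTop)
        tendsto_natCast_atTop_atTop
    have hc : Continuous (fun x : ℝ => |x| ^ n) := by fun_prop
    refine hcov.integrable_of_integral_norm_bounded (L (1 + X ^ (2 * n)))
      (fun N => hc.continuousOn.integrableOn_compact isCompact_Icc) (Eventually.of_forall fun N => ?_)
    have hb : ∀ x : ℝ, |x| ^ n ≤ 1 + x ^ (2 * n) := by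
      intro x
      have : x ^ (2 * n) = (|x| ^ n) ^ 2 := by rw [← pow_mul, mul_comm n 2, pow_mul, pow_mul, sq_abs]
      rw [this]
      nlinarith [sq_nonneg (|x| ^ n - 1)]
    have hb0 : ∀ x : ℝ, 0 ≤ 1 + x ^ (2 * n) := fun x => (by positivity : 0 ≤ |x| ^ n).trans (hb x)
    calc ∫ x in Set.Icc (-(N : ℝ)) N, ‖|x| ^ n‖ ∂σ
        ≤ ∫ x in Set.Icc (-(N : ℝ)) N, cutPoly N (1 + X ^ (2 * n)) x ∂σ := by
          refine setIntegral_mono_on (hc.norm.continuousOn.integrableOn_compact isCompact_Icc)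
            (hint _).integrableOn measurableSet_Icc (fun x hx => ?_)
          rw [cutPoly_apply, cutoff_one N x (abs_le.2 hx), one_mul, Real.norm_of_nonneg (by positivity)]
          simpa using hb x
      _ ≤ ∫ x, cutPoly N (1 + X ^ (2 * n)) x ∂σ := by
          refine setIntegral_le_integral (hint _) (Eventually.of_forall fun x => ?_)
          refine mul_nonneg (cutoff_nonneg N x) ?_
          simpa using hb0 x
      _ = g (ccLin (cutPoly N (1 + X ^ (2 * n)))) := hσ _
      _ ≤ g (polyLin (1 + X ^ (2 * n))) := by
          refine gmono _ _ (fun x => ?_)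
          refine mul_le_of_le_one_left ?_ (cutoff_le N x)
          simpa using hb0 x
      _ = _ := hg _
  refine ⟨σ, hmom, fun p => ?_⟩
  have hpint : Integrable (fun x => p.eval x) σ := by
    induction p using Polynomial.induction_on' with
    | add p q hp hq => simp only [eval_add]; exact hp.add hq
    | monomial n a =>
      simp only [eval_monomial]
      refine Integrable.const_mul ?_ a
      refine (hmom n).mono' (by fun_prop) (Eventually.of_forall fun x => ?_)
      simp
  have h1 : Tendsto (fun N : ℕ => ∫ x, cutPoly N p x ∂σ) atTop (nhds (∫ x, p.eval x ∂σ)) := by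
    refine tendsto_integral_of_dominated_convergence (fun x => ‖p.eval x‖)
      (fun N => (cutPoly N p).continuous.aestronglyMeasurable) hpint.norm
      (fun N => Eventually.of_forall fun x => ?_) (Eventually.of_forall fun x => ?_)
    · rw [cutPoly_apply, norm_mul, Real.norm_of_nonneg (cutoff_nonneg N x)]
      exact mul_le_of_le_one_left (norm_nonneg _) (cutoff_le N x)
    · apply tendsto_const_nhds.congr'
      obtain ⟨M, hM⟩ := exists_nat_ge |x|
      filter_upwards [eventually_ge_atTop M] with N hN
      rw [cutPoly_apply, cutoff_one N x (hM.trans (by exact_mod_cast hN)), one_mul]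
  have h2 : Tendsto (fun N : ℕ => ∫ x, cutPoly N p x ∂σ) atTop (nhds (L p)) := by
    rw [tendsto_iff_norm_sub_tendsto_zero]
    have h3 : Tendsto (fun N : ℕ => L (p ^ 2 + X ^ 2) / (N : ℝ)) atTop (nhds 0) :=
      tendsto_const_div_atTop_nhds_zero_nat _
    refine squeeze_zero' (Eventually.of_forall fun N => norm_nonneg _) ?_ h3
    filter_upwards [eventually_gt_atTop 0] with N hN
    have hN' : (0 : ℝ) < N := by exact_mod_cast hN
    have hb : ∀ x : ℝ, |cutoff N x * p.eval x - p.eval x| ≤ (N : ℝ)⁻¹ * (p.eval x ^ 2 + x ^ 2) := by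
      intro x
      by_cases hx : |x| ≤ N
      · rw [cutoff_one N x hx]; simp; positivity
      · push Not at hx
        have e : |cutoff N x * p.eval x - p.eval x| ≤ |p.eval x| := by
          rw [show cutoff N x * p.eval x - p.eval x = -((1 - cutoff N x) * p.eval x) by ring, abs_neg,
            abs_mul, abs_of_nonneg (by linarith [cutoff_le N x])]
          exact mul_le_of_le_one_left (abs_nonneg _) (by linarith [cutoff_nonneg N x])
        refine e.trans ?_
        rw [inv_mul_eq_div, le_div_iff₀ hN']
        nlinarith [sq_nonneg (|p.eval x| - |x|), sq_abs x, sq_abs (p.eval x), abs_nonneg (p.eval x),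
          mul_le_mul_of_nonneg_left hx.le (abs_nonneg (p.eval x)), sq_nonneg (p.eval x), sq_nonneg x]
    rw [hσ, ← hg p, ← map_sub, Real.norm_eq_abs, abs_le]
    have hq : L (p ^ 2 + X ^ 2) / (N : ℝ) = g ((N : ℝ)⁻¹ • polyLin (p ^ 2 + X ^ 2)) := by
      rw [map_smul, hg, smul_eq_mul, inv_mul_eq_div]
    have hval : ∀ x, ((N : ℝ)⁻¹ • polyLin (p ^ 2 + X ^ 2)).1 x = (N : ℝ)⁻¹ * (p.eval x ^ 2 + x ^ 2) := by
      intro x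
      change (N : ℝ)⁻¹ * (p ^ 2 + X ^ 2).eval x = _
      simp
    rw [hq, ← map_neg]
    constructor
    · refine gmono _ _ (fun x => ?_)
      change -(((N : ℝ)⁻¹ • polyLin (p ^ 2 + X ^ 2)).1 x) ≤ cutoff N x * p.eval x - p.eval x
      rw [hval]
      exact (abs_le.1 (hb x)).1
    · refine gmono _ _ (fun x => ?_)
      rw [hval]
      exact (abs_le.1 (hb x)).2
  exact tendsto_nhds_unique h1 h2

theorem polyMemLp {μ : Measure ℝ} (hmom : HasAllMoments μ) (p : ℂ[X]) :
    MemLp (fun x : ℝ => p.eval (x : ℂ)) 2 μ := by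
  induction p using Polynomial.induction_on' with
  | add p q hp hq => simp only [eval_add]; exact hp.add hq
  | monomial n a =>
    simp only [eval_monomial]
    have hc : Continuous (fun x : ℝ => a * (x : ℂ) ^ n) := by fun_prop
    rw [memLp_two_iff_integrable_sq_norm hc.aestronglyMeasurable]
    refine ((hmom (2 * n)).const_mul (‖a‖ ^ 2)).congr (Eventually.of_forall fun x => ?_)
    simp [mul_pow]
    left; rw [← pow_mul, mul_comm 2 n, pow_mul]

def polyMap {μ : Measure ℝ} (hmom : HasAllMoments μ) : ℂ[X] →ₗ[ℂ] Lp ℂ 2 μ where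
  toFun p := (polyMemLp hmom p).toLp
  map_add' p q := by
    rw [← MemLp.toLp_add]
    congr 1; ext x; simp
  map_smul' c p := by
    rw [RingHom.id_apply, ← MemLp.toLp_const_smul]
    congr 1; ext x; simp

theorem polyMap_coe {μ : Measure ℝ} (hmom : HasAllMoments μ) (p : ℂ[X]) :
    ⇑(polyMap hmom p) =ᵐ[μ] fun x : ℝ => p.eval (x : ℂ) := (polyMemLp hmom p).coeFn_toLp

theorem polyMap_norm {μ : Measure ℝ} (hmom : HasAllMoments μ) (p : ℂ[X]) :
    ‖polyMap hmom p‖ ^ 2 = ∫ x : ℝ, ‖p.eval (x : ℂ)‖ ^ 2 ∂μ := by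
  have h := @inner_self_eq_norm_sq_to_K ℂ _ _ _ _ (polyMap hmom p)
  rw [L2.inner_def] at h
  have h2 : ∫ x, inner ℂ ((polyMap hmom p) x) ((polyMap hmom p) x) ∂μ
      = ((∫ x : ℝ, ‖p.eval (x : ℂ)‖ ^ 2 ∂μ : ℝ) : ℂ) := by
    rw [← integral_complex_ofReal]
    refine integral_congr_ae ?_
    filter_upwards [polyMap_coe hmom p] with x hx
    rw [hx, inner_self_eq_norm_sq_to_K]
    simp
  rw [h2] at h
  have h3 : ((∫ x : ℝ, ‖p.eval (x : ℂ)‖ ^ 2 ∂μ : ℝ) : ℂ) = ((‖polyMap hmom p‖ ^ 2 : ℝ) : ℂ) := by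
    rw [h]; simp
  exact (Complex.ofReal_injective h3).symm

theorem supp_neg {μ : Measure ℝ} (hsupp : mSupp μ ⊆ Set.Ici (0 : ℝ)) : μ (Set.Iio 0) = 0 := by
  apply measure_null_of_locally_null
  intro x hx
  have hx' : x ∉ mSupp μ := fun h => not_lt.2 (Set.mem_Ici.1 (hsupp h)) (Set.mem_Iio.1 hx)
  simp only [mSupp, Set.mem_setOf_eq, not_forall, not_not] at hx'
  obtain ⟨U, hU, hU0⟩ := hx'
  exact ⟨U, mem_nhdsWithin_of_mem_nhds hU, hU0⟩

theorem ae_pos {μ : Measure ℝ} (hsupp : mSupp μ ⊆ Set.Ici (0 : ℝ)) (hmass : μ {0} = 0) :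
    ∀ᵐ x ∂μ, 0 < x := by
  rw [ae_iff]
  have : {a : ℝ | ¬ 0 < a} = Set.Iio 0 ∪ {0} := by
    ext x; simp [le_iff_lt_or_eq]
  rw [this]
  exact measure_union_null (supp_neg hsupp) hmass

theorem polyMap_inj {μ : Measure ℝ} (hmom : HasAllMoments μ) (hinf : (mSupp μ).Infinite) :
    Function.Injective (polyMap hmom) := by
  rw [injective_iff_map_eq_zero]
  intro p hp
  by_contra hp0
  have h1 : (fun x : ℝ => p.eval (x : ℂ)) =ᵐ[μ] 0 :=
    (polyMap_coe hmom p).symm.trans (by rw [hp]; exact Lp.coeFn_zero _ _ _)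
  have h2 : mSupp μ ⊆ (fun x : ℝ => (x : ℂ)) ⁻¹' (p.roots.toFinset : Set ℂ) := by
    intro x hx
    by_contra hne
    have hne' : p.eval (x : ℂ) ≠ 0 := by
      intro h; apply hne; simp [hp0, h]
    have hopen : IsOpen {y : ℝ | p.eval (y : ℂ) ≠ 0} :=
      isOpen_ne_fun (p.continuous.comp Complex.continuous_ofReal) continuous_const
    exact hx _ (hopen.mem_nhds hne') (ae_iff.1 h1)
  exact hinf ((p.roots.toFinset.finite_toSet.preimage
    (Complex.ofReal_injective.injOn)).subset h2)

theorem polyMap_pos {μ : Measure ℝ} (hmom : HasAllMoments μ)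
    (hpos : ∀ᵐ x ∂μ, 0 < x) (u : ℂ[X]) :
    ∃ t : ℝ, 0 ≤ t ∧ inner ℂ (polyMap hmom u) (polyMap hmom (X * u)) = t := by
  refine ⟨∫ x : ℝ, x * ‖u.eval (x : ℂ)‖ ^ 2 ∂μ, integral_nonneg_of_ae ?_, ?_⟩
  · filter_upwards [hpos] with x hx
    simp only [Pi.zero_apply]; positivity
  · rw [L2.inner_def, ← integral_complex_ofReal]
    refine integral_congr_ae ?_
    filter_upwards [polyMap_coe hmom u, polyMap_coe hmom (X * u)] with x h1 h2
    rw [h1, h2]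
    simp only [eval_mul, eval_X, ← smul_eq_mul (x : ℂ), inner_smul_right,
      inner_self_eq_norm_sq_to_K]
    simp

theorem polyMap_low {μ : Measure ℝ} (hmom : HasAllMoments μ)
    (hpos : ∀ᵐ x ∂μ, 0 < x) (h0 : (0 : ℝ) ∈ mSupp μ) (m : ℕ) (δ : ℝ) (hδ : 0 < δ) :
    ∃ c : ℝ, 0 < c ∧ ∀ p : ℂ[X],
      (∀ x : ℝ, 0 ≤ x → x ≤ δ → 1 / 2 ≤ ‖p.eval (x : ℂ)‖) → c ≤ ‖polyMap hmom (X ^ m * p)‖ := by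
  have hint : Integrable (fun x : ℝ => (|x| ^ m / 2) ^ 2) μ := by
    refine ((hmom (2 * m)).const_mul (1 / 4)).congr (Eventually.of_forall fun x => ?_)
    simp only; ring
  set J := ∫ x in Set.Icc 0 δ, (|x| ^ m / 2) ^ 2 ∂μ with hJ
  have hJ0 : 0 < J := by
    rw [hJ, setIntegral_pos_iff_support_of_nonneg_ae
      (Eventually.of_forall fun x => by simp only [Pi.zero_apply]; positivity) hint.integrableOn]
    rw [pos_iff_ne_zero]
    intro hz
    refine h0 (Set.Iio δ) (Iio_mem_nhds hδ) ?_
    have hsub : Set.Iio δ ⊆ {x : ℝ | ¬ 0 < x} ∪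
        ((Function.support fun x : ℝ => (|x| ^ m / 2) ^ 2) ∩ Set.Icc 0 δ) := by
      intro x hx
      by_cases hx0 : 0 < x
      · right
        refine ⟨?_, hx0.le, le_of_lt hx⟩
        rw [Function.mem_support]; positivity
      · left; exact hx0
    exact measure_mono_null hsub (measure_union_null (ae_iff.1 hpos) hz)
  refine ⟨Real.sqrt J, Real.sqrt_pos.2 hJ0, fun p hp => ?_⟩
  apply Real.sqrt_le_iff.2
  refine ⟨norm_nonneg _, ?_⟩
  rw [polyMap_norm]
  have hpi : Integrable (fun x : ℝ => ‖(X ^ m * p).eval (x : ℂ)‖ ^ 2) μ :=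
    (memLp_two_iff_integrable_sq_norm (polyMemLp hmom _).1).1 (polyMemLp hmom _)
  have hc1 : J ≤ ∫ x in Set.Icc 0 δ, ‖(X ^ m * p).eval (x : ℂ)‖ ^ 2 ∂μ := by
    refine setIntegral_mono_on hint.integrableOn hpi.integrableOn measurableSet_Icc
      (fun x hx => ?_)
    have := hp x hx.1 hx.2
    simp only [eval_mul, eval_pow, eval_X, norm_mul, norm_pow, Complex.norm_real,
      Real.norm_eq_abs]
    rw [div_eq_mul_one_div]
    gcongr
  have hc2 : ∫ x in Set.Icc 0 δ, ‖(X ^ m * p).eval (x : ℂ)‖ ^ 2 ∂μ ≤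
      ∫ x : ℝ, ‖(X ^ m * p).eval (x : ℂ)‖ ^ 2 ∂μ := by
    refine setIntegral_le_integral hpi (Eventually.of_forall fun x => ?_)
    simp only [Pi.zero_apply]; positivity
  exact hc1.trans hc2

theorem det_unbounded {μ : Measure ℝ} (hmom : HasAllMoments μ) (hdet : IsDeterminate μ)
    (hsupp : mSupp μ ⊆ Set.Ici (0 : ℝ)) (K : ℝ) (hK : 0 ≤ K)
    (hB : ∀ p : ℂ[X], ‖p.eval (-1)‖ ≤ K * ‖polyMap hmom p‖) : False := by
  have hpi : ∀ p : ℝ[X], Integrable (fun x => p.eval x) μ := by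
    intro p
    induction p using Polynomial.induction_on' with
    | add p q hp hq => simp only [eval_add]; exact hp.add hq
    | monomial n a =>
      simp only [eval_monomial]
      refine Integrable.const_mul ?_ a
      refine (hmom n).mono' (by fun_prop) (Eventually.of_forall fun x => ?_)
      simp
  set ρ := ((K + 1) ^ 2)⁻¹ with hρ
  have hρ0 : 0 < ρ := by positivity
  let L : ℝ[X] →ₗ[ℝ] ℝ :=
    { toFun := fun p => ∫ x, p.eval x ∂μ - ρ * p.eval (-1)
      map_add' := fun p q => by
        simp only [eval_add]
        rw [integral_add (hpi p) (hpi q)]; ring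
      map_smul' := fun c p => by
        simp only [eval_smul, smul_eq_mul, RingHom.id_apply]
        rw [integral_const_mul]; ring }
  obtain ⟨σ, hσ, hσL⟩ := hamburger L (by
    intro p hp
    obtain ⟨g, hg⟩ := aux_sos _ p le_rfl hp
    change 0 ≤ ∫ x, p.eval x ∂μ - ρ * p.eval (-1)
    simp only [hg]
    rw [← polyMap_norm hmom]
    have h1 : ‖g.eval (((-1 : ℝ)) : ℂ)‖ ≤ (K + 1) * ‖polyMap hmom g‖ := by
      have := hB g
      push_cast
      exact this.trans (by gcongr; linarith)
    have h2 : ‖g.eval (((-1 : ℝ)) : ℂ)‖ ^ 2 ≤ ((K + 1) * ‖polyMap hmom g‖) ^ 2 := by gcongr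
    rw [sub_nonneg, hρ, inv_mul_le_iff₀ (by positivity), ← mul_pow]
    exact h2)
  have heq := hdet (σ + ENNReal.ofReal ρ • Measure.dirac (-1)) (by
    intro n
    exact (hσ n).add_measure (((integrable_dirac (by finiteness))).smul_measure (by simp))) (by
    intro n
    have h1 := hσL (X ^ n)
    simp only [eval_pow, eval_X] at h1
    have hLn : L (X ^ n) = ∫ x, x ^ n ∂μ - ρ * (-1) ^ n := by
      change ∫ x, (X ^ n : ℝ[X]).eval x ∂μ - ρ * (X ^ n : ℝ[X]).eval (-1) = _
      simp
    rw [integral_add_measure, integral_smul_measure, integral_dirac, h1, hLn,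
      ENNReal.toReal_ofReal hρ0.le, smul_eq_mul]
    · ring
    · refine (hσ n).mono' (by fun_prop) (Eventually.of_forall fun x => ?_)
      simp
    · exact ((integrable_dirac (by finiteness))).smul_measure (by simp))
  have h1 : μ {-1} = 0 := measure_mono_null (by simp) (supp_neg hsupp)
  rw [← heq] at h1
  simp at h1
  linarith [h1.2]

theorem all_unbounded {μ : Measure ℝ} (hmom : HasAllMoments μ) (hinf : (mSupp μ).Infinite)
    (hdet : IsDeterminate μ) (hsupp : mSupp μ ⊆ Set.Ici (0 : ℝ))
    (h0 : (0 : ℝ) ∈ mSupp μ) (hmass : μ {0} = 0) (m : ℕ) :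
    ∀ K : ℝ, 0 ≤ K → ¬ ∀ p : ℂ[X], ‖p.eval (-1)‖ ≤ K * ‖polyMap hmom (X ^ m * p)‖ := by
  have hpos := ae_pos hsupp hmass
  induction m with
  | zero =>
    intro K hK h
    exact det_unbounded hmom hdet hsupp K hK (by simpa using h)
  | succ m ih =>
    intro K hK h
    obtain ⟨K', hK', h'⟩ := aux_step_s8 (polyMap hmom ∘ₗ LinearMap.mulLeft ℂ (X ^ m))
      (by
        intro a b hab
        have := polyMap_inj hmom hinf hab
        simpa using this)
      (by
        intro s
        obtain ⟨t, ht, hte⟩ := polyMap_pos hmom hpos (X ^ m * (X * s))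
        refine ⟨t, ht, ?_⟩
        rw [← hte]
        simp only [LinearMap.coe_comp, Function.comp_apply, LinearMap.mulLeft_apply]
        congr 2; ring)
      (by simpa using polyMap_low hmom hpos h0 m) K hK
      (by
        intro p
        have := h p
        rw [pow_succ, mul_assoc] at this
        simpa using this)
    exact ih K' hK' (by simpa using h')

theorem compact_approx (φ : ℝ → ℝ) (hφ : Continuous φ) (hc : HasCompactSupport φ) (ε : ℝ)
    (hε : 0 < ε) : ∃ P : ℝ[X], ∀ x : ℝ, 0 < x → |P.eval ((1 + x)⁻¹) - φ x| ≤ ε := by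
  obtain ⟨R, hR0, hR⟩ : ∃ R : ℝ, 0 < R ∧ ∀ x, R < x → φ x = 0 := by
    obtain ⟨R, hR⟩ := hc.isCompact.isBounded.subset_closedBall 0
    refine ⟨max R 1, by positivity, fun x hx => ?_⟩
    by_contra h
    have h1 := hR (subset_tsupport φ h)
    rw [mem_closedBall_zero_iff, Real.norm_eq_abs] at h1
    have := le_abs_self x
    have := le_max_left R 1
    linarith
  let ψ : ℝ → ℝ := fun y => if y ≤ 0 then 0 else φ (y⁻¹ - 1)
  have hψ : Continuous ψ := by
    rw [continuous_iff_continuousAt]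
    intro y
    by_cases hy : 0 < y
    · have h1 : ContinuousAt (fun y : ℝ => φ (y⁻¹ - 1)) y :=
        hφ.continuousAt.comp ((continuousAt_inv₀ hy.ne').sub continuousAt_const)
      refine h1.congr ?_
      filter_upwards [Ioi_mem_nhds hy] with u hu
      simp only [ψ, if_neg (not_le.2 (Set.mem_Ioi.1 hu))]
    · have h1 : ContinuousAt (fun _ : ℝ => (0 : ℝ)) y := continuousAt_const
      refine h1.congr ?_
      have : y < (R + 1)⁻¹ := lt_of_le_of_lt (not_lt.1 hy) (by positivity)
      filter_upwards [Iio_mem_nhds this] with u hu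
      simp only [ψ]
      split_ifs with h
      · rfl
      · push Not at h
        symm
        apply hR
        have := (lt_inv_comm₀ h (by positivity)).1 hu
        linarith
  obtain ⟨P, hP⟩ := exists_polynomial_near_of_continuousOn 0 1 ψ hψ.continuousOn ε hε
  refine ⟨P, fun x hx => ?_⟩
  have h1 := hP ((1 + x)⁻¹) ⟨by positivity, inv_le_one_of_one_le₀ (by linarith)⟩
  have h2 : ψ ((1 + x)⁻¹) = φ x := by
    have : ¬ ((1 + x)⁻¹ ≤ 0) := not_le.2 (by positivity)
    simp only [ψ, if_neg this, inv_inv]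
    congr 1; ring
  rw [h2] at h1
  exact h1.le

theorem orth_zero {μ : Measure ℝ} (hmom : HasAllMoments μ)
    (hpos : ∀ᵐ x ∂μ, 0 < x) (m : ℕ)
    (hunb : ∀ K : ℝ, 0 ≤ K → ¬ ∀ p : ℂ[X], ‖p.eval (-1)‖ ≤ K * ‖polyMap hmom (X ^ m * p)‖)
    (f : Lp ℂ 2 μ) (hf : ∀ q : ℂ[X], inner ℂ (polyMap hmom (X ^ m * q)) f = 0) : f = 0 := by
  let w : ℕ → ℝ → ℂ := fun j x => ((((1 + x)⁻¹ : ℝ) : ℂ)) ^ j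
  have hwm : ∀ j, Measurable (w j) := fun j => by
    simp only [w]; fun_prop
  have hw1 : ∀ j, ∀ᵐ x ∂μ, ‖w j x‖ ≤ 1 := by
    intro j
    filter_upwards [hpos] with x hx
    simp only [w, norm_pow, Complex.norm_real, Real.norm_eq_abs]
    apply pow_le_one₀ (abs_nonneg _)
    rw [abs_of_pos (by positivity)]
    exact inv_le_one_of_one_le₀ (by linarith)
  have hFm : ∀ j, MemLp (fun x => w j x * f x) 2 μ := by
    intro j
    refine (Lp.memLp f).mono ((hwm j).aestronglyMeasurable.mul (Lp.memLp f).1) ?_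
    filter_upwards [hw1 j] with x hx
    rw [norm_mul]
    exact mul_le_of_le_one_left (norm_nonneg _) hx
  let F : ℕ → Lp ℂ 2 μ := fun j => (hFm j).toLp
  have hFc : ∀ j, ⇑(F j) =ᵐ[μ] fun x => w j x * f x := fun j => (hFm j).coeFn_toLp
  have key : ∀ j, ∀ q : ℂ[X], inner ℂ (polyMap hmom (X ^ m * q)) (F j) = 0 := by
    intro j
    induction j with
    | zero =>
      intro q
      have : F 0 = f := by
        apply Lp.ext
        filter_upwards [hFc 0] with x hx
        rw [hx]; simp [w]
      rw [this]; exact hf q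
    | succ j ih =>
      have hshift : ∀ R : ℂ[X], inner ℂ (polyMap hmom (X ^ m * ((X + 1) * R))) (F (j + 1)) = 0 := by
        intro R
        rw [← ih R, L2.inner_def, L2.inner_def]
        refine integral_congr_ae ?_
        filter_upwards [hpos, hFc j, hFc (j + 1), polyMap_coe hmom (X ^ m * R),
          polyMap_coe hmom (X ^ m * ((X + 1) * R))] with x hx h1 h2 h3 h4
        rw [h1, h2, h3, h4]
        have hne : (1 + (x : ℂ)) ≠ 0 := by
          have : (1 + x : ℝ) ≠ 0 := by positivity
          exact_mod_cast this
        simp only [w, eval_mul, eval_pow, eval_X, eval_add, eval_one, RCLike.inner_apply, map_mul,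
          map_pow, map_add, map_one, Complex.conj_ofReal, pow_succ]
        push_cast
        field_simp
        ring
      intro q
      by_contra hne
      set v := inner ℂ (polyMap hmom (X ^ m * q)) (F (j + 1)) with hv
      have hv0 : 0 < ‖v‖ := norm_pos_iff.2 hne
      refine hunb (‖q.eval (-1)‖ * ‖F (j + 1)‖ / ‖v‖) (by positivity) (fun p => ?_)
      -- p(-1) q - q(-1) p is divisible by X + 1
      have hroot : (C (p.eval (-1)) * q - C (q.eval (-1)) * p).IsRoot (-1) := by
        simp [IsRoot]; ring
      obtain ⟨R, hR⟩ := dvd_iff_isRoot.2 hroot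
      have e1 : X ^ m * ((X + 1) * R) = p.eval (-1) • (X ^ m * q) - q.eval (-1) • (X ^ m * p) := by
        rw [smul_eq_C_mul, smul_eq_C_mul]
        have : (X - C (-1) : ℂ[X]) = X + 1 := by simp
        rw [this] at hR
        linear_combination (-(X ^ m)) * hR
      have h1 := hshift R
      rw [e1, map_sub, map_smul, map_smul, inner_sub_left, inner_smul_left, inner_smul_left,
        sub_eq_zero] at h1
      have h2 := congrArg norm h1
      rw [norm_mul, norm_mul, RCLike.norm_conj, RCLike.norm_conj] at h2
      have h3 := norm_inner_le_norm (𝕜 := ℂ) (polyMap hmom (X ^ m * p)) (F (j + 1))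
      rw [div_mul_eq_mul_div, le_div_iff₀ hv0, hv, h2]
      calc _ ≤ ‖q.eval (-1)‖ * (‖polyMap hmom (X ^ m * p)‖ * ‖F (j + 1)‖) := by gcongr
        _ = _ := by ring
  -- integrals
  let g : ℝ → ℂ := fun x => (x : ℂ) ^ m * f x
  have hgi : Integrable g μ := by
    have h1 := polyMemLp hmom (X ^ m)
    simp only [eval_pow, eval_X] at h1
    exact h1.integrable_mul (Lp.memLp f)
  have hwgi : ∀ j, Integrable (fun x => w j x * g x) μ := fun j =>
    hgi.bdd_mul (hwm j).aestronglyMeasurable (hw1 j)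
  have hI : ∀ j, ∫ x, w j x * g x ∂μ = 0 := by
    intro j
    rw [← key j 1, L2.inner_def]
    refine integral_congr_ae ?_
    filter_upwards [hFc j, polyMap_coe hmom (X ^ m * 1)] with x h1 h2
    rw [h1, h2]
    simp [g]
    ring
  have hP : ∀ P : ℝ[X], Integrable (fun x : ℝ => ((P.eval ((1 + x)⁻¹) : ℝ) : ℂ) * g x) μ ∧
      ∫ x : ℝ, ((P.eval ((1 + x)⁻¹) : ℝ) : ℂ) * g x ∂μ = 0 := by
    intro P
    induction P using Polynomial.induction_on' with
    | add p q hp hq =>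
      have e : (fun x : ℝ => (((p + q).eval ((1 + x)⁻¹) : ℝ) : ℂ) * g x) =
          fun x : ℝ => ((p.eval ((1 + x)⁻¹) : ℝ) : ℂ) * g x + ((q.eval ((1 + x)⁻¹) : ℝ) : ℂ) * g x := by
        ext x; rw [eval_add]; push_cast; ring
      rw [e]
      refine ⟨hp.1.add hq.1, ?_⟩
      rw [integral_add hp.1 hq.1, hp.2, hq.2, add_zero]
    | monomial n a =>
      have e : (fun x : ℝ => (((monomial n a).eval ((1 + x)⁻¹) : ℝ) : ℂ) * g x) =
          fun x : ℝ => (a : ℂ) * (w n x * g x) := by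
        ext x; rw [eval_monomial]; simp only [w]; push_cast; ring
      rw [e]
      refine ⟨(hwgi n).const_mul _, ?_⟩
      rw [integral_const_mul, hI, mul_zero]
  have hφ : ∀ φ : ℝ → ℝ, ContDiff ℝ ((⊤ : ℕ∞) : WithTop ℕ∞) φ → HasCompactSupport φ →
      ∫ x : ℝ, φ x • g x ∂μ = 0 := by
    intro φ hφd hφc
    have hφi : Integrable (fun x => φ x • g x) μ :=
      hgi.locallyIntegrable.integrable_smul_left_of_hasCompactSupport hφd.continuous hφc
    rw [← norm_le_zero_iff]
    apply le_of_forall_pos_le_add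
    intro ε hε
    rw [zero_add]
    set B := ∫ x, ‖g x‖ ∂μ with hB
    have hB0 : 0 ≤ B := integral_nonneg (fun x => norm_nonneg _)
    obtain ⟨P, hPa⟩ := compact_approx φ hφd.continuous hφc (ε / (B + 1)) (by positivity)
    have e : ∫ x : ℝ, φ x • g x ∂μ = ∫ x : ℝ, (φ x • g x - ((P.eval ((1 + x)⁻¹) : ℝ) : ℂ) * g x) ∂μ := by
      rw [integral_sub hφi (hP P).1, (hP P).2, sub_zero]
    rw [e]
    calc _ ≤ ∫ x, ε / (B + 1) * ‖g x‖ ∂μ := by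
          refine norm_integral_le_of_norm_le (hgi.norm.const_mul _) ?_
          filter_upwards [hpos] with x hx
          have h1 := hPa x hx
          rw [Complex.real_smul, ← sub_mul, norm_mul, ← Complex.ofReal_sub, Complex.norm_real,
            Real.norm_eq_abs, abs_sub_comm]
          gcongr
      _ = ε / (B + 1) * B := by rw [integral_const_mul]
      _ ≤ ε := by
          rw [div_mul_eq_mul_div, div_le_iff₀ (by positivity)]
          nlinarith
  have hg0 : ∀ᵐ x ∂μ, g x = 0 := ae_eq_zero_of_integral_contDiff_smul_eq_zero hgi.locallyIntegrable hφ
  apply Lp.ext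
  filter_upwards [hg0, hpos, Lp.coeFn_zero ℂ 2 μ] with x h1 h2 h3
  rw [h3]
  have : (x : ℂ) ^ m ≠ 0 := pow_ne_zero _ (by exact_mod_cast h2.ne')
  simpa [g, this, h2.ne'] using h1

theorem stmt8 (μ : Measure ℝ) (hmom : HasAllMoments μ) (hinf : (mSupp μ).Infinite)
    (hdet : IsDeterminate μ) (hsupp : mSupp μ ⊆ Set.Ici (0 : ℝ))
    (h0 : (0 : ℝ) ∈ mSupp μ) (hmass : μ {0} = 0) (n : ℕ) :
    Dense {v : WithLp 2 (Lp ℂ 2 μ × EuclideanSpace ℂ (Fin (n + 1))) |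
      ∃ p : Polynomial ℂ,
        ⇑(WithLp.equiv 2 (Lp ℂ 2 μ × EuclideanSpace ℂ (Fin (n + 1))) v).1
            =ᵐ[μ] (fun x : ℝ => p.eval (x : ℂ)) ∧
        ∀ j : Fin (n + 1),
          (WithLp.equiv 2 (Lp ℂ 2 μ × EuclideanSpace ℂ (Fin (n + 1))) v).2 j
            = (Polynomial.derivative^[(j : ℕ)] p).eval 0} := by
  let D : ℂ[X] →ₗ[ℂ] EuclideanSpace ℂ (Fin (n + 1)) :=
    { toFun := fun p => WithLp.toLp 2 (fun j => (Polynomial.derivative^[(j : ℕ)] p).eval 0)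
      map_add' := fun p q => by ext j; simp [iterate_map_add]
      map_smul' := fun c p => by ext j; simp [Polynomial.iterate_derivative_smul] }
  let Ψ : ℂ[X] →ₗ[ℂ] WithLp 2 (Lp ℂ 2 μ × EuclideanSpace ℂ (Fin (n + 1))) :=
    { toFun := fun p => WithLp.toLp 2 (polyMap hmom p, D p)
      map_add' := fun p q => by rw [map_add, map_add]; rfl
      map_smul' := fun c p => by rw [map_smul, map_smul]; rfl }
  have hset : (LinearMap.range Ψ : Set _) ⊆ {v : WithLp 2 (Lp ℂ 2 μ × EuclideanSpace ℂ (Fin (n + 1))) |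
      ∃ p : Polynomial ℂ,
        ⇑(WithLp.equiv 2 (Lp ℂ 2 μ × EuclideanSpace ℂ (Fin (n + 1))) v).1
            =ᵐ[μ] (fun x : ℝ => p.eval (x : ℂ)) ∧
        ∀ j : Fin (n + 1),
          (WithLp.equiv 2 (Lp ℂ 2 μ × EuclideanSpace ℂ (Fin (n + 1))) v).2 j
            = (Polynomial.derivative^[(j : ℕ)] p).eval 0} := by
    rintro _ ⟨p, rfl⟩
    exact ⟨p, polyMap_coe hmom p, fun j => rfl⟩
  refine Dense.mono hset ?_
  rw [Submodule.dense_iff_topologicalClosure_eq_top, Submodule.topologicalClosure_eq_top_iff,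
    Submodule.eq_bot_iff]
  intro v hv
  have horth : ∀ p, inner ℂ (polyMap hmom p) (WithLp.ofLp v).1 + inner ℂ (D p) (WithLp.ofLp v).2 = 0 := by
    intro p
    have := hv (Ψ p) ⟨p, rfl⟩
    rwa [WithLp.prod_inner_apply] at this
  have hD0 : ∀ q : ℂ[X], D (X ^ (n + 1) * q) = 0 := by
    intro q
    ext j
    change (Polynomial.derivative^[(j : ℕ)] (X ^ (n + 1) * q)).eval 0 = 0
    have hdvd := Polynomial.pow_sub_dvd_iterate_derivative_of_pow_dvd (p := X ^ (n + 1) * q) (q := X)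
      (n := n + 1) (j : ℕ) (dvd_mul_right _ _)
    obtain ⟨r, hr⟩ := hdvd
    rw [hr]
    have : n + 1 - (j : ℕ) ≠ 0 := by omega
    simp [this]
  have hf0 : (WithLp.ofLp v).1 = 0 := by
    refine orth_zero hmom (ae_pos hsupp hmass) (n + 1)
      (all_unbounded hmom hinf hdet hsupp h0 hmass (n + 1)) _ (fun q => ?_)
    have := horth (X ^ (n + 1) * q)
    rwa [hD0, inner_zero_left, add_zero] at this
  have hβ0 : (WithLp.ofLp v).2 = 0 := by
    ext j
    have h1 := horth (X ^ (j : ℕ))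
    rw [hf0, inner_zero_right, zero_add, PiLp.inner_apply, Finset.sum_eq_single j] at h1
    · have h2 : (D (X ^ (j : ℕ))) j = ((j : ℕ).factorial : ℂ) := by
        change (Polynomial.derivative^[(j : ℕ)] (X ^ (j : ℕ) : ℂ[X])).eval 0 = _
        rw [Polynomial.iterate_derivative_X_pow_eq_natCast_mul]
        simp [Nat.descFactorial_self]
      rw [h2] at h1
      simpa [Nat.factorial_ne_zero] using h1
    · intro i _ hij
      have h2 : (D (X ^ (j : ℕ))) i = 0 := by
        change (Polynomial.derivative^[(i : ℕ)] (X ^ (j : ℕ) : ℂ[X])).eval 0 = _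
        rw [Polynomial.iterate_derivative_X_pow_eq_natCast_mul]
        have hij' : (i : ℕ) ≠ j := fun h => hij (Fin.ext h)
        rcases lt_or_gt_of_ne hij' with h | h
        · have : (j : ℕ) - i ≠ 0 := by omega
          simp [this]
        · simp [Nat.descFactorial_eq_zero_iff_lt.2 h]
      rw [h2, inner_zero_left]
    · simp
  have : WithLp.ofLp v = 0 := Prod.ext hf0 hβ0
  exact (WithLp.ofLp_eq_zero 2).1 this
end
end

section
/- Let μ be a determinate measure on ℝ with all moments finite and infinite support, such that supp(μ) ⊆ [0,∞) and 0 ∈ supp(μ) is not an isolated point of supp(μ). Let (p_n) be the orthonormal polynomials of μ. Then for every k ≥ 1 and every ε > 0, there exists N such that for all n ≥ N, the polynomial p_n has at least k distinct roots in the interval (0, ε); equivalently, for every fixed k ≥ 1, the k-th smallest zero x_{n,k} of p_n tends to 0 as n → ∞. -/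
open MeasureTheory Polynomial Filter

noncomputable section

theorem deg_C_mul_le (a : ℝ) (f : Polynomial ℝ) : (C a * f).degree ≤ f.degree := by
  rw [← Polynomial.smul_eq_C_mul]; exact Polynomial.degree_smul_le _ _

theorem expand_aux (p : ℕ → Polynomial ℝ) (hdeg : ∀ n : ℕ, (p n).degree = n) (n : ℕ) :
    ∀ f : Polynomial ℝ, f.degree < n → ∃ c : ℕ → ℝ, f = ∑ j ∈ Finset.range n, C (c j) * p j := by
  induction n with
  | zero =>
    intro f hf
    refine ⟨0, ?_⟩
    have : f = 0 := by
      rw [← Polynomial.degree_eq_bot]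
      exact Nat.WithBot.lt_zero_iff.mp (by simpa using hf)
    simp [this]
  | succ n ih =>
    intro f hf
    have hl : (p n).coeff n ≠ 0 := by
      have h1 : (p n).natDegree = n := Polynomial.natDegree_eq_of_degree_eq_some (hdeg n)
      have h2 : p n ≠ 0 := by
        intro h; have := hdeg n; rw [h] at this; simp at this
      have := Polynomial.leadingCoeff_ne_zero.mpr h2
      rwa [Polynomial.leadingCoeff, h1] at this
    set a := f.coeff n / (p n).coeff n with ha
    have hg : (f - C a * p n).degree < n := by
      rw [Polynomial.degree_lt_iff_coeff_zero] at hf ⊢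
      intro m hm
      rcases Nat.eq_or_lt_of_le hm with h | h
      · subst h
        simp [ha, hl]
      · have h3 : (p n).coeff m = 0 := Polynomial.coeff_eq_zero_of_degree_lt (by
          rw [hdeg]; exact_mod_cast h)
        simp [hf m h, h3]
    obtain ⟨c, hc⟩ := ih _ hg
    refine ⟨fun j => if j = n then a else c j, ?_⟩
    rw [Finset.sum_range_succ]
    have : ∑ j ∈ Finset.range n, C (if j = n then a else c j) * p j
        = ∑ j ∈ Finset.range n, C (c j) * p j := by
      refine Finset.sum_congr rfl fun j hj => ?_
      have : j ≠ n := by have := Finset.mem_range.mp hj; omega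
      simp [this]
    rw [this, ← hc]
    simp

theorem expand (L : Polynomial ℝ →ₗ[ℝ] ℝ) (p : ℕ → Polynomial ℝ)
    (hdeg : ∀ n : ℕ, (p n).degree = n)
    (horth : ∀ n m : ℕ, L (p n * p m) = if n = m then 1 else 0) (n : ℕ)
    (f : Polynomial ℝ) (hf : f.degree < n) :
    f = ∑ j ∈ Finset.range n, C (L (f * p j)) * p j := by
  obtain ⟨c, hc⟩ := expand_aux p hdeg n f hf
  conv_lhs => rw [hc]
  refine Finset.sum_congr rfl fun j hj => ?_
  congr 2
  rw [hc, Finset.sum_mul, map_sum]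
  have : ∀ i ∈ Finset.range n, L (C (c i) * p i * p j) = if i = j then c i else 0 := by
    intro i _
    rw [mul_assoc, ← Polynomial.smul_eq_C_mul, map_smul, horth]
    simp
  rw [Finset.sum_congr rfl this]
  rw [Finset.sum_ite_eq' , if_pos hj]

theorem gauss (L : Polynomial ℝ →ₗ[ℝ] ℝ) (p : ℕ → Polynomial ℝ)
    (hdeg : ∀ n : ℕ, (p n).degree = n)
    (horth : ∀ n m : ℕ, L (p n * p m) = if n = m then 1 else 0) (n : ℕ) (hn : 1 ≤ n) :
    ∃ l w : Fin n → ℝ, (∀ i, 0 ≤ w i) ∧ (∀ i, (p n).eval (l i) = 0) ∧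
      ∀ k ≤ n, ∑ i, w i * l i ^ k = L (X ^ k) := by
  let J : Matrix (Fin n) (Fin n) ℝ := fun i j => L (X * p i * p j)
  have hJ : J.IsHermitian := by
    refine Matrix.IsHermitian.ext fun i j => ?_
    simp only [star_trivial, J]
    congr 1; ring
  let e := hJ.eigenvectorBasis
  let l := hJ.eigenvalues
  let q : Fin n → Polynomial ℝ := fun i => ∑ j : Fin n, C (e i j) * p j
  have hLq : ∀ (i : Fin n) (f : Polynomial ℝ), L (f * q i) = ∑ j, e i j * L (f * p j) := by
    intro i f
    simp only [q, Finset.mul_sum, map_sum]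
    refine Finset.sum_congr rfl fun j _ => ?_
    rw [mul_left_comm, ← Polynomial.smul_eq_C_mul, map_smul, smul_eq_mul]
  have hqp : ∀ (i j : Fin n), L (q i * p j) = e i j := by
    intro i j
    rw [mul_comm, hLq]
    simp only [horth]
    simp [Fin.val_inj]
  have hqdeg : ∀ i, (q i).degree < n := by
    intro i
    refine (Polynomial.degree_sum_le _ _).trans_lt ?_
    rw [Finset.sup_lt_iff (by exact WithBot.bot_lt_coe _)]
    intro j _
    refine (deg_C_mul_le _ _).trans_lt ?_
    rw [hdeg]
    exact_mod_cast j.2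
  have hq0 : ∀ i, q i ≠ 0 := by
    intro i h
    have h1 : e i = 0 := by
      ext j
      rw [← hqp i j, h]; simp
    have h2 := e.orthonormal.1 i
    rw [h1] at h2; simp at h2
  have hXq : ∀ i (j : Fin n), L (X * q i * p j) = l i * e i j := by
    intro i j
    have h := congrFun (hJ.mulVec_eigenvectorBasis i) j
    have h1 : (J.mulVec (e i).ofLp) j = L (X * q i * p j) := by
      rw [mul_right_comm, hLq]
      simp only [Matrix.mulVec, dotProduct, J]
      exact Finset.sum_congr rfl fun k _ => mul_comm _ _
    rw [← h1]
    simpa using h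
  have hrel : ∀ i, X * q i - C (l i) * q i = C (L ((X * q i - C (l i) * q i) * p n)) * p n := by
    intro i
    have hd : (X * q i - C (l i) * q i).degree < ((n + 1 : ℕ) : WithBot ℕ) := by
      refine (Polynomial.degree_sub_le _ _).trans_lt ?_
      have h1 := hqdeg i
      rw [Polynomial.degree_eq_natDegree (hq0 i)] at h1
      have h2 : (q i).natDegree < n := by exact_mod_cast h1
      refine max_lt ?_ ?_
      · rw [mul_comm, Polynomial.degree_mul_X, Polynomial.degree_eq_natDegree (hq0 i)]
        exact_mod_cast Nat.succ_lt_succ h2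
      · refine (deg_C_mul_le _ _).trans_lt ((hqdeg i).trans ?_)
        exact_mod_cast Nat.lt_succ_self n
    have h := expand L p hdeg horth (n+1) _ hd
    rw [Finset.sum_range_succ] at h
    rw [Finset.sum_eq_zero, zero_add] at h
    · exact h
    · intro j hj
      have hj' := Finset.mem_range.mp hj
      have := hXq i ⟨j, hj'⟩
      have h2 := hqp i ⟨j, hj'⟩
      simp only at this h2
      rw [sub_mul, map_sub, this, mul_assoc, ← Polynomial.smul_eq_C_mul (p := q i * p j), map_smul, h2]
      simp
  have hpk : ∀ k < n, L (X ^ k * p n) = 0 := by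
    intro k hk
    have hd : (X ^ k : Polynomial ℝ).degree < n := by
      rw [Polynomial.degree_X_pow]; exact_mod_cast hk
    conv_lhs => rw [expand L p hdeg horth n _ hd]
    rw [Finset.sum_mul, map_sum]
    refine Finset.sum_eq_zero fun j hj => ?_
    have := Finset.mem_range.mp hj
    rw [mul_assoc, ← Polynomial.smul_eq_C_mul, map_smul, horth, if_neg (by omega), smul_zero]
  have hXk : ∀ i, ∀ k ≤ n, L (X ^ k * q i) = l i ^ k * L (q i) := by
    intro i k
    induction k with
    | zero => simp
    | succ k ih =>
      intro hk
      have h1 : X ^ (k+1) * q i = l i • (X ^ k * q i)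
          + (L ((X * q i - C (l i) * q i) * p n)) • (X ^ k * p n) := by
        rw [Polynomial.smul_eq_C_mul, Polynomial.smul_eq_C_mul]
        linear_combination X ^ k * hrel i
      rw [h1, map_add, map_smul, map_smul, hpk k (by omega), ih (by omega)]
      simp only [smul_eq_mul]; ring
  have hone : (1 : Polynomial ℝ) = ∑ i, C (L (q i)) * q i := by
    have h1 := expand L p hdeg horth n 1 (by
      rw [Polynomial.degree_one]; exact_mod_cast hn)
    simp only [one_mul] at h1
    rw [← Fin.sum_univ_eq_sum_range (fun j => C (L (p j)) * p j) n] at h1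
    conv_lhs => rw [h1]
    have hexp : ∑ i, C (L (q i)) * q i = ∑ i, ∑ j : Fin n, C (L (q i)) * (C (e i j) * p j) := by
      refine Finset.sum_congr rfl fun i _ => ?_
      rw [← Finset.mul_sum]
    rw [hexp, Finset.sum_comm]
    refine Finset.sum_congr rfl fun j _ => ?_
    simp only [← mul_assoc, ← C_mul]
    rw [← Finset.sum_mul, ← map_sum]
    congr 2
    let v : EuclideanSpace ℝ (Fin n) := WithLp.toLp 2 (fun j => L (p j))
    have h2 := congrArg (fun u : EuclideanSpace ℝ (Fin n) => u j) (e.sum_repr' v)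
    have h3 : ∀ i, inner ℝ (e i) v = L (q i) := by
      intro i
      have := hLq i 1
      simp only [one_mul] at this
      rw [this, PiLp.inner_apply]
      refine Finset.sum_congr rfl fun k _ => ?_
      simp [v, mul_comm]
    simp only [h3] at h2
    change L (p j) = ∑ i, L (q i) * e i j
    simpa [v, -map_sum] using h2.symm
  refine ⟨l, fun i => L (q i) ^ 2, fun i => sq_nonneg _, ?_, ?_⟩
  · intro i
    have h := hrel i
    set c := L ((X * q i - C (l i) * q i) * p n)
    have hc : c ≠ 0 := by
      intro hc
      rw [hc] at h
      have h5 : (X - C (l i)) * q i = 0 := by rw [sub_mul, h]; simp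
      rcases mul_eq_zero.mp h5 with h6 | h6
      · exact Polynomial.X_sub_C_ne_zero _ h6
      · exact hq0 i h6
    have h7 := congrArg (Polynomial.eval (l i)) h
    simp at h7
    tauto
  · intro k hk
    have h1 : (X ^ k : Polynomial ℝ) = ∑ i, L (q i) • (X ^ k * q i) := by
      conv_lhs => rw [← mul_one (X ^ k), hone, Finset.mul_sum]
      refine Finset.sum_congr rfl fun j _ => ?_
      rw [Polynomial.smul_eq_C_mul]; ring
    conv_rhs => rw [h1]
    rw [map_sum]
    refine Finset.sum_congr rfl fun j _ => ?_
    rw [map_smul, hXk j k hk, smul_eq_mul]; ring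

def clip (R y : ℝ) : ℝ := max (-R) (min R y)

theorem clip_abs {R : ℝ} (hR : 0 ≤ R) (y : ℝ) : |clip R y| ≤ R := by
  unfold clip
  rw [abs_le]
  exact ⟨le_max_left _ _, max_le (by linarith) (min_le_left _ _)⟩

theorem clip_sub {R : ℝ} (hR : 0 < R) (y : ℝ) : |y - clip R y| ≤ y ^ 2 / R := by
  unfold clip
  rw [le_div_iff₀ hR]
  rcases le_total R y with h | h
  · rw [min_eq_left h, max_eq_right (by linarith), abs_of_nonneg (by linarith)]
    nlinarith
  · rw [min_eq_right h]
    rcases le_total (-R) y with h2 | h2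
    · rw [max_eq_right h2]; simp; positivity
    · rw [max_eq_left h2, abs_of_nonpos (by linarith)]
      nlinarith

theorem clip_cont (R : ℝ) : Continuous (clip R) := by
  unfold clip; fun_prop

theorem clip_le {R y : ℝ} (hR : 0 ≤ R) (hy : 0 ≤ y) : clip R y ≤ y :=
  max_le (by linarith) (min_le_right _ _)

theorem clip_nonneg {R y : ℝ} (hR : 0 ≤ R) (hy : 0 ≤ y) : 0 ≤ clip R y :=
  le_max_of_le_right (le_min hR hy)

theorem clip_mono {R S y : ℝ} (hR : 0 ≤ R) (hRS : R ≤ S) (hy : 0 ≤ y) : clip R y ≤ clip S y :=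
  max_le ((by linarith : -R ≤ 0).trans (clip_nonneg (hR.trans hRS) hy))
    (le_max_of_le_right (min_le_min_right _ hRS))

theorem clip_eq {R y : ℝ} (hy : 0 ≤ y) (h : y ≤ R) : clip R y = y := by
  unfold clip
  rw [min_eq_right h, max_eq_right (by linarith)]

theorem clip_tendsto {F : Filter ℕ} {ν : ℕ → ProbabilityMeasure ℝ}
    {ν' : ProbabilityMeasure ℝ} (hlim : Tendsto ν F (nhds ν')) (f : ℝ → ℝ) (hf : Continuous f)
    {R : ℝ} (hR : 0 ≤ R) :
    Tendsto (fun n => ∫ x, clip R (f x) ∂(ν n : Measure ℝ)) F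
      (nhds (∫ x, clip R (f x) ∂(ν' : Measure ℝ))) := by
  rw [ProbabilityMeasure.tendsto_iff_forall_integral_tendsto] at hlim
  exact hlim (BoundedContinuousFunction.ofNormedAddCommGroup (fun x => clip R (f x))
    ((clip_cont R).comp hf) R (fun x => clip_abs hR _))

theorem clip_int (ν : Measure ℝ) [IsFiniteMeasure ν] (f : ℝ → ℝ) (hf : Continuous f)
    {R : ℝ} (hR : 0 ≤ R) : Integrable (fun x => clip R (f x)) ν :=
  Integrable.of_bound ((clip_cont R).comp hf).aestronglyMeasurable R
    (ae_of_all _ fun _ => clip_abs hR _)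

theorem lim_nonneg {F : Filter ℕ} [F.NeBot] {ν : ℕ → ProbabilityMeasure ℝ}
    {ν' : ProbabilityMeasure ℝ} (hlim : Tendsto ν F (nhds ν')) (g : ℝ → ℝ) (hg : Continuous g)
    (hg0 : ∀ x, 0 ≤ g x) (hint : ∀ n, Integrable g (ν n : Measure ℝ)) (b : ℝ)
    (hb : ∀ᶠ n in F, ∫ x, g x ∂(ν n : Measure ℝ) = b) :
    Integrable g (ν' : Measure ℝ) ∧ ∫ x, g x ∂(ν' : Measure ℝ) ≤ b := by
  have hb0 : 0 ≤ b := by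
    obtain ⟨n, hn⟩ := hb.exists
    rw [← hn]; exact integral_nonneg hg0
  have h1 : ∀ R : ℝ, 0 ≤ R → ∫ x, clip R (g x) ∂(ν' : Measure ℝ) ≤ b := by
    intro R hR
    refine le_of_tendsto (clip_tendsto hlim g hg hR) ?_
    filter_upwards [hb] with n hn
    rw [← hn]
    exact integral_mono (clip_int _ g hg hR) (hint n) fun x => clip_le hR (hg0 x)
  have h2 : ∫⁻ x, ENNReal.ofReal (g x) ∂(ν' : Measure ℝ) ≤ ENNReal.ofReal b := by
    have := lintegral_tendsto_of_tendsto_of_monotone (μ := (ν' : Measure ℝ))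
      (f := fun (n : ℕ) x => ENNReal.ofReal (clip n (g x))) (F := fun x => ENNReal.ofReal (g x))
      (fun n => (((clip_cont n).comp hg).measurable.ennreal_ofReal).aemeasurable)
      (ae_of_all _ fun x i j hij => ENNReal.ofReal_le_ofReal
        (clip_mono (Nat.cast_nonneg i) (by exact_mod_cast hij) (hg0 x)))
      (ae_of_all _ fun x => by
        refine tendsto_const_nhds.congr' ?_
        obtain ⟨N, hN⟩ := exists_nat_ge (g x)
        filter_upwards [eventually_ge_atTop N] with n hn
        rw [clip_eq (hg0 x) (hN.trans (by exact_mod_cast hn))])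
    refine le_of_tendsto' this fun n => ?_
    rw [← ofReal_integral_eq_lintegral_ofReal (clip_int _ g hg (Nat.cast_nonneg n))
      (ae_of_all _ fun x => clip_nonneg (Nat.cast_nonneg n) (hg0 x))]
    exact ENNReal.ofReal_le_ofReal (h1 n (Nat.cast_nonneg n))
  have h3 : Integrable g (ν' : Measure ℝ) := by
    refine ⟨hg.aestronglyMeasurable, ?_⟩
    rw [hasFiniteIntegral_iff_ofReal (ae_of_all _ hg0)]
    exact h2.trans_lt ENNReal.ofReal_lt_top
  refine ⟨h3, ?_⟩
  rw [← ofReal_integral_eq_lintegral_ofReal h3 (ae_of_all _ hg0)] at h2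
  exact (ENNReal.ofReal_le_ofReal_iff hb0).mp h2

theorem clip_err (ν : Measure ℝ) [IsFiniteMeasure ν] (f : ℝ → ℝ) (hf : Continuous f)
    (h1 : Integrable f ν) (h2 : Integrable (fun x => f x ^ 2) ν) {R : ℝ} (hR : 0 < R) :
    |∫ x, f x ∂ν - ∫ x, clip R (f x) ∂ν| ≤ (∫ x, f x ^ 2 ∂ν) / R := by
  rw [← integral_sub h1 (clip_int ν f hf hR.le), ← integral_div]
  refine abs_integral_le_integral_abs.trans ?_
  exact integral_mono (h1.sub (clip_int ν f hf hR.le)).abs (h2.div_const R)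
    fun x => clip_sub hR _

theorem moment_lim_eq {F : Filter ℕ} [F.NeBot] {ν : ℕ → ProbabilityMeasure ℝ}
    {ν' : ProbabilityMeasure ℝ} (hlim : Tendsto ν F (nhds ν')) (f : ℝ → ℝ) (hf : Continuous f)
    (hint : ∀ n, Integrable f (ν n : Measure ℝ))
    (hint2 : ∀ n, Integrable (fun x => f x ^ 2) (ν n : Measure ℝ)) (a b : ℝ)
    (ha : ∀ᶠ n in F, ∫ x, f x ∂(ν n : Measure ℝ) = a)
    (hb : ∀ᶠ n in F, ∫ x, f x ^ 2 ∂(ν n : Measure ℝ) = b) :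
    Integrable f (ν' : Measure ℝ) ∧ ∫ x, f x ∂(ν' : Measure ℝ) = a := by
  obtain ⟨i2, hle⟩ := lim_nonneg hlim (fun x => f x ^ 2) (by fun_prop) (fun x => sq_nonneg _)
    hint2 b hb
  have i1 : Integrable f (ν' : Measure ℝ) := by
    refine ((integrable_const (1:ℝ)).add i2).mono' hf.aestronglyMeasurable (ae_of_all _ fun x => ?_)
    simp only [Real.norm_eq_abs, Pi.add_apply]
    nlinarith [sq_nonneg (|f x| - 1), sq_abs (f x)]
  refine ⟨i1, ?_⟩
  have key : ∀ R : ℝ, 0 < R → |∫ x, f x ∂(ν' : Measure ℝ) - a| ≤ (2 * b) / R := by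
    intro R hR
    have e1 := clip_err (ν' : Measure ℝ) f hf i1 i2 hR
    have e2 : |∫ x, clip R (f x) ∂(ν' : Measure ℝ) - a| ≤ b / R := by
      refine le_of_tendsto ((clip_tendsto hlim f hf hR.le).sub_const a).abs ?_
      filter_upwards [ha, hb] with n h1 h2
      have := clip_err (ν n : Measure ℝ) f hf (hint n) (hint2 n) hR
      rw [h1, h2] at this
      rwa [abs_sub_comm]
    have e3 : (∫ x, f x ^ 2 ∂(ν' : Measure ℝ)) / R ≤ b / R := by gcongr
    have e4 : 2 * b / R = b / R + b / R := by ring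
    rw [e4]
    refine (abs_sub_le _ (∫ x, clip R (f x) ∂(ν' : Measure ℝ)) _).trans ?_
    linarith
  have h0 : |∫ x, f x ∂(ν' : Measure ℝ) - a| ≤ 0 :=
    ge_of_tendsto (tendsto_const_nhds.div_atTop tendsto_id)
      ((eventually_gt_atTop 0).mono fun R hR => key R hR)
  exact sub_eq_zero.mp (abs_nonpos_iff.mp h0)

theorem tight_of_second (ν : ℕ → ProbabilityMeasure ℝ) (b : ℝ)
    (hint : ∀ n, Integrable (fun x : ℝ => x ^ 2) (ν n : Measure ℝ))
    (hb : ∀ n, ∫ x, x ^ 2 ∂(ν n : Measure ℝ) = b) :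
    IsCompact (closure (Set.range ν)) := by
  apply isCompact_closure_of_isTightMeasureSet
  rw [isTightMeasureSet_iff_exists_isCompact_measure_compl_le]
  intro ε hε
  have hlim : Tendsto (fun r : ℝ => ENNReal.ofReal (b / r ^ 2)) atTop (nhds 0) := by
    rw [← ENNReal.ofReal_zero]
    refine ENNReal.tendsto_ofReal ?_
    exact tendsto_const_nhds.div_atTop (tendsto_pow_atTop two_ne_zero)
  obtain ⟨r, hr, hr0⟩ := ((hlim.eventually (ge_mem_nhds hε)).and (eventually_gt_atTop 0)).exists
  refine ⟨Metric.closedBall 0 r, isCompact_closedBall _ _, ?_⟩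
  rintro _ ⟨_, ⟨n, rfl⟩, rfl⟩
  refine le_trans ?_ hr
  have h1 := mul_meas_ge_le_integral_of_nonneg (μ := (ν n : Measure ℝ)) (f := fun x : ℝ => x ^ 2)
    (ae_of_all _ fun x => sq_nonneg _) (hint n) (r ^ 2)
  rw [hb] at h1
  have h2 : (ν n : Measure ℝ).real {x | r ^ 2 ≤ x ^ 2} ≤ b / r ^ 2 := by
    rw [le_div_iff₀ (by positivity)]; linarith
  have h3 : (ν n : Measure ℝ) {x | r ^ 2 ≤ x ^ 2} ≤ ENNReal.ofReal (b / r ^ 2) := by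
    rw [← ofReal_measureReal]
    exact ENNReal.ofReal_le_ofReal h2
  refine (measure_mono ?_).trans h3
  intro x hx
  simp only [Set.mem_compl_iff, Metric.mem_closedBall, dist_zero_right, not_le,
    Real.norm_eq_abs] at hx
  simp only [Set.mem_ofPred_eq]
  rw [← sq_abs x]
  gcongr

theorem poly_int (μ : Measure ℝ) (hmom : HasAllMoments μ) (f : Polynomial ℝ) :
    Integrable (fun x => f.eval x) μ := by
  have hp : ∀ n : ℕ, Integrable (fun x : ℝ => x ^ n) μ := fun n =>
    (hmom n).mono' (by fun_prop) (ae_of_all _ fun x => by simp)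
  simp only [Polynomial.eval_eq_sum_range]
  exact integrable_finsetSum _ fun i _ => (hp i).const_mul _

theorem discrete_exists (n : ℕ) (l w : Fin n → ℝ) (hw : ∀ i, 0 ≤ w i) (hs : ∑ i, w i = 1) :
    ∃ ν : ProbabilityMeasure ℝ, (∀ f : ℝ → ℝ, Integrable f (ν : Measure ℝ)) ∧
      (∀ f : ℝ → ℝ, ∫ x, f x ∂(ν : Measure ℝ) = ∑ i, w i * f (l i)) ∧
      ∀ U : Set ℝ, (∀ i, l i ∉ U) → (ν : Measure ℝ) U = 0 := by
  let m : Measure ℝ := ∑ i, ENNReal.ofReal (w i) • Measure.dirac (l i)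
  have hm : IsProbabilityMeasure m := by
    constructor
    simp only [m, Measure.coe_finsetSum, Finset.sum_apply, Measure.smul_apply, measure_univ,
      smul_eq_mul, mul_one]
    rw [← ENNReal.ofReal_sum_of_nonneg fun i _ => hw i, hs, ENNReal.ofReal_one]
  have hi : ∀ (f : ℝ → ℝ) i, Integrable f (ENNReal.ofReal (w i) • Measure.dirac (l i)) :=
    fun f i => (integrable_dirac (by simp)).smul_measure ENNReal.ofReal_ne_top
  refine ⟨⟨m, hm⟩, ?_, ?_, ?_⟩
  · intro f
    change Integrable f m
    exact integrable_finsetSum_measure.mpr fun i _ => hi f i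
  · intro f
    change ∫ x, f x ∂m = _
    rw [integral_finsetSum_measure fun i _ => hi f i]
    refine Finset.sum_congr rfl fun i _ => ?_
    rw [integral_smul_measure, integral_dirac, ENNReal.toReal_ofReal (hw i), smul_eq_mul]
  · intro U hU
    change m U = 0
    simp only [m, Measure.coe_finsetSum, Finset.sum_apply, Measure.smul_apply]
    refine Finset.sum_eq_zero fun i _ => ?_
    rw [Measure.dirac_apply, Set.indicator_of_notMem (hU i), smul_zero]

theorem root_in_open (μ : Measure ℝ) (hmom : HasAllMoments μ)
    (hdet : IsDeterminate μ) (p : ℕ → Polynomial ℝ)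
    (hdeg : ∀ n : ℕ, (p n).degree = n)
    (horth : ∀ n m : ℕ,
      ∫ x, (p n).eval x * (p m).eval x ∂μ = if n = m then 1 else 0)
    (U : Set ℝ) (hU : IsOpen U) (hμU : μ U ≠ 0) :
    ∃ N : ℕ, ∀ n, N ≤ n → ∃ z ∈ U, (p n).eval z = 0 := by
  have hfin : IsFiniteMeasure μ := by
    have := hmom 0
    simp only [pow_zero] at this
    exact (integrable_const_iff_isFiniteMeasure one_ne_zero).mp this
  set M : ℝ := μ.real Set.univ with hM
  have hM0 : 0 < M := by
    rw [hM, measureReal_def, ENNReal.toReal_pos_iff]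
    refine ⟨?_, measure_lt_top _ _⟩
    exact lt_of_lt_of_le (pos_iff_ne_zero.mpr hμU) (measure_mono (Set.subset_univ _))
  let L : Polynomial ℝ →ₗ[ℝ] ℝ :=
    { toFun := fun f => ∫ x, f.eval x ∂μ
      map_add' := fun f g => by
        simp only [Polynomial.eval_add]
        exact integral_add (poly_int μ hmom f) (poly_int μ hmom g)
      map_smul' := fun c f => by
        simp only [Polynomial.eval_smul, smul_eq_mul, RingHom.id_apply]
        exact integral_const_mul _ _ }
  have hLX : ∀ k, L (X ^ k) = ∫ x, x ^ k ∂μ := fun k => by simp [L]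
  have horth' : ∀ n m : ℕ, L (p n * p m) = if n = m then 1 else 0 := fun n m => by
    rw [← horth n m]; simp [L]
  have hν : ∀ n : ℕ, ∃ ν : ProbabilityMeasure ℝ, (∀ f : ℝ → ℝ, Integrable f (ν : Measure ℝ)) ∧
      (∀ k ≤ n + 2, ∫ x, x ^ k ∂(ν : Measure ℝ) = (∫ x, x ^ k ∂μ) / M) ∧
      ∀ U : Set ℝ, (¬ ∃ z ∈ U, (p (n + 2)).eval z = 0) → (ν : Measure ℝ) U = 0 := by
    intro n
    obtain ⟨l, w, hw, hroot, hk⟩ := gauss L p hdeg horth' (n + 2) (by omega)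
    have hs : ∑ i, w i / M = 1 := by
      have := hk 0 (by omega)
      rw [hLX] at this
      simp only [pow_zero, mul_one, integral_const, smul_eq_mul] at this
      rw [← Finset.sum_div, this, div_self hM0.ne']
    obtain ⟨ν, h1, h2, h3⟩ := discrete_exists (n + 2) l (fun i => w i / M)
      (fun i => div_nonneg (hw i) hM0.le) hs
    refine ⟨ν, h1, ?_, ?_⟩
    · intro k hkn
      rw [h2, ← hLX, ← hk k hkn, Finset.sum_div]
      exact Finset.sum_congr rfl fun i _ => by ring
    · intro V hV
      refine h3 V fun i hi => hV ⟨l i, hi, hroot i⟩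
  choose ν hint hmoment hzero using hν
  by_contra hcon
  have hfreq : ∃ᶠ n in atTop, ¬ ∃ z ∈ U, (p (n + 2)).eval z = 0 := by
    intro hev
    simp only [not_not] at hev
    obtain ⟨N, hN⟩ := eventually_atTop.mp hev
    refine hcon ⟨N + 2, fun n hn => ?_⟩
    obtain ⟨m, rfl⟩ : ∃ m, n = m + 2 := ⟨n - 2, by omega⟩
    exact hN m (by omega)
  have hne := Filter.frequently_iff_neBot.mp hfreq
  let F := Ultrafilter.of (atTop ⊓ 𝓟 {n : ℕ | ¬ ∃ z ∈ U, (p (n + 2)).eval z = 0})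
  have hF := Ultrafilter.of_le (atTop ⊓ 𝓟 {n : ℕ | ¬ ∃ z ∈ U, (p (n + 2)).eval z = 0})
  have hF1 : (F : Filter ℕ) ≤ atTop := hF.trans inf_le_left
  have hF2 : ∀ᶠ n in (F : Filter ℕ), ¬ ∃ z ∈ U, (p (n + 2)).eval z = 0 :=
    (hF.trans inf_le_right) (mem_principal_self _)
  have hcomp := tight_of_second ν ((∫ x, x ^ 2 ∂μ) / M) (fun n => hint n _)
    (fun n => hmoment n 2 (by omega))
  obtain ⟨ν', -, hν'⟩ := hcomp.ultrafilter_le_nhds (F.map ν) (by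
    rw [le_principal_iff]
    exact Filter.Eventually.of_forall (f := (F : Filter ℕ)) fun n => subset_closure ⟨n, rfl⟩)
  have hlim : Tendsto ν (F : Filter ℕ) (nhds ν') := hν'
  have hev : ∀ k, ∀ᶠ n in (F : Filter ℕ),
      ∫ x, x ^ k ∂(ν n : Measure ℝ) = (∫ x, x ^ k ∂μ) / M := fun k =>
    hF1 ((eventually_ge_atTop k).mono fun n hn => hmoment n k (by omega))
  have hmom' : ∀ k : ℕ, Integrable (fun x : ℝ => x ^ k) (ν' : Measure ℝ) ∧
      ∫ x, x ^ k ∂(ν' : Measure ℝ) = (∫ x, x ^ k ∂μ) / M := by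
    intro k
    refine moment_lim_eq hlim (fun x => x ^ k) (by fun_prop) (fun n => hint n _)
      (fun n => hint n _) _ ((∫ x, x ^ (k * 2) ∂μ) / M) (hev k) ?_
    simpa only [pow_mul] using hev (k * 2)
  have heq : ENNReal.ofReal M • (ν' : Measure ℝ) = μ := by
    apply hdet
    · intro n
      refine Integrable.smul_measure ?_ ENNReal.ofReal_ne_top
      have := (hmom' n).1.abs
      simpa only [abs_pow] using this
    · intro n
      rw [integral_smul_measure, (hmom' n).2, ENNReal.toReal_ofReal hM0.le, smul_eq_mul]
      field_simp
  have hle := ProbabilityMeasure.le_liminf_measure_open_of_tendsto hlim hU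
  have hz : (fun n => (ν n : Measure ℝ) U) =ᶠ[(F : Filter ℕ)] fun _ => 0 :=
    hF2.mono fun n hn => hzero n U hn
  rw [Filter.liminf_congr hz, Filter.liminf_const] at hle
  apply hμU
  rw [← heq, Measure.smul_apply, nonpos_iff_eq_zero.mp hle, smul_zero]

theorem stmt9 (μ : Measure ℝ) (hmom : HasAllMoments μ) (hinf : (mSupp μ).Infinite)
    (hdet : IsDeterminate μ) (hsupp : mSupp μ ⊆ Set.Ici (0 : ℝ))
    (h0 : (0 : ℝ) ∈ mSupp μ) (hnotisol : (0 : ℝ) ∈ closure (mSupp μ \ {0}))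
    (p : ℕ → Polynomial ℝ)
    (hdeg : ∀ n : ℕ, (p n).degree = n)
    (hlead : ∀ n : ℕ, 0 < (p n).leadingCoeff)
    (horth : ∀ n m : ℕ,
      ∫ x, (p n).eval x * (p m).eval x ∂μ = if n = m then 1 else 0) :
    ∀ k : ℕ, 1 ≤ k → ∀ ε : ℝ, 0 < ε → ∃ N : ℕ, ∀ n : ℕ, N ≤ n →
      ∃ S : Finset ℝ, k ≤ S.card ∧ ↑S ⊆ Set.Ioo (0 : ℝ) ε ∧
        ∀ x ∈ S, (p n).eval x = 0 := by
  intro k _ ε hε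
  have hinf2 : (mSupp μ ∩ Set.Ioo 0 ε).Infinite := by
    intro hfin
    have hcl : IsClosed (mSupp μ ∩ Set.Ioo 0 ε) := hfin.isClosed
    have hnhds : Set.Iio ε ∩ (mSupp μ ∩ Set.Ioo 0 ε)ᶜ ∈ nhds (0 : ℝ) :=
      Filter.inter_mem (Iio_mem_nhds hε) (hcl.isOpen_compl.mem_nhds (by simp))
    obtain ⟨x, ⟨hx1, hx2⟩, hx3, hx4⟩ := mem_closure_iff_nhds.mp hnotisol _ hnhds
    refine hx2 ⟨hx3, lt_of_le_of_ne (hsupp hx3) fun h => hx4 h.symm, hx1⟩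
  obtain ⟨T, hT, hTc⟩ := hinf2.exists_subset_card_eq k
  obtain ⟨V, hV, hdisj⟩ := T.finite_toSet.t2_separation
  have hN : ∀ x : ℝ, ∃ N : ℕ, x ∈ T → ∀ n, N ≤ n →
      ∃ z ∈ V x ∩ Set.Ioo 0 ε, (p n).eval z = 0 := by
    intro x
    by_cases hx : x ∈ T
    · have hxT := hT hx
      have ho : IsOpen (V x ∩ Set.Ioo 0 ε) := (hV x).2.inter isOpen_Ioo
      obtain ⟨N, h⟩ := root_in_open μ hmom hdet p hdeg horth _ ho
        (hxT.1 _ (ho.mem_nhds ⟨(hV x).1, hxT.2⟩))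
      exact ⟨N, fun _ => h⟩
    · exact ⟨0, fun h => absurd h hx⟩
  choose N hN using hN
  refine ⟨T.sup N, fun n hn => ?_⟩
  have hz : ∀ x : ℝ, ∃ z, x ∈ T → z ∈ V x ∩ Set.Ioo 0 ε ∧ (p n).eval z = 0 := by
    intro x
    by_cases hx : x ∈ T
    · obtain ⟨z, h1, h2⟩ := hN x hx n ((Finset.le_sup hx).trans hn)
      exact ⟨z, fun _ => ⟨h1, h2⟩⟩
    · exact ⟨0, fun h => absurd h hx⟩
  choose z hz using hz
  refine ⟨T.image z, ?_, ?_, ?_⟩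
  · rw [Finset.card_image_of_injOn, hTc]
    intro x hx y hy hxy
    by_contra hne
    refine Set.disjoint_left.mp (hdisj hx hy hne) (hz x hx).1.1 ?_
    rw [hxy]
    exact (hz y hy).1.1
  · intro y hy
    obtain ⟨x, hx, rfl⟩ := Finset.mem_image.mp (Finset.mem_coe.mp hy)
    exact (hz x hx).1.2
  · intro y hy
    obtain ⟨x, hx, rfl⟩ := Finset.mem_image.mp hy
    exact (hz x hx).2
end
end
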